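/- arXiv:0806.4326 — 8 statements merged into one kernel-verified Lean document; each statement's English description precedes it below -/
import Mathlib

section
/- Let ℛ be a finite family of closed unit disks in ℝ² and let K = ⋂_{D∈ℛ} D be their intersection. Then for every disk D ∈ ℛ, the set frontier(K) ∩ frontier(D) is preconnected (i.e. it is empty or connected); that is, each disk contributes at most one arc (edge) to the boundary of the unit-disk polygon K. -/
noncomputable section

/-- The plane ℝ². -/
abbrev E2 := EuclideanSpace ℝ (Fin 2)

/-!
Put the center of `D` at the origin. For a point `u` of the sphere bounding `D`, lying in another
ball is a linear condition: `u` must belong to a certain half-space. As the other ball is not larger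
than `D`, this half-space misses the origin, unless that ball is `D` itself and the condition is
void. If all conditions are void, the set in question is the whole sphere. Otherwise the
intersection `C` of the half-spaces misses the origin; it is convex and stable under dilations
`x ↦ t • x`, `1 ≤ t`, so the radial projection maps the convex set `C ∩ D` continuously onto the
part of the sphere lying in `C`.
-/

open Metric Set
open scoped RealInnerProductSpace

theorem frontier_inter_frontier_of_subset {X : Type*} [TopologicalSpace X] {s t : Set X}
    (hs : IsClosed s) (hst : s ⊆ t) : frontier s ∩ frontier t = s ∩ frontier t := by
  refine Subset.antisymm (inter_subset_inter_left _ hs.frontier_subset) ?_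
  rintro x ⟨hxs, hxt⟩
  rw [hs.frontier_eq]
  exact ⟨⟨hxs, fun hx ↦ hxt.2 (interior_mono hst hx)⟩, hxt⟩

theorem isPreconnected_inter_sphere_of_convex {E : Type*} [NormedAddCommGroup E] [NormedSpace ℝ E]
    {C : Set E} (hC : Convex ℝ C) (h0 : 0 ∉ C)
    (hsmul : ∀ x ∈ C, ∀ t : ℝ, 1 ≤ t → t • x ∈ C) (r : ℝ) :
    IsPreconnected (C ∩ sphere 0 r) := by
  have norm_pos : ∀ x ∈ C, 0 < ‖x‖ := fun x hx ↦
    norm_pos_iff.2 (ne_of_mem_of_not_mem hx h0)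
  have image_eq : (fun x ↦ (r / ‖x‖) • x) '' (C ∩ closedBall 0 r) = C ∩ sphere 0 r := by
    ext x
    constructor
    · rintro ⟨y, ⟨hyC, hyr⟩, rfl⟩
      have hy := norm_pos y hyC
      rw [mem_closedBall_zero_iff] at hyr
      refine ⟨hsmul y hyC _ ((one_le_div hy).2 hyr), mem_sphere_zero_iff_norm.2 ?_⟩
      rw [norm_smul, norm_div, norm_norm, div_mul_cancel₀ _ hy.ne',
        Real.norm_of_nonneg (hy.le.trans hyr)]
    · rintro ⟨hxC, hxr⟩
      refine ⟨x, ⟨hxC, sphere_subset_closedBall hxr⟩, ?_⟩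
      rw [← mem_sphere_zero_iff_norm.1 hxr]
      simp only [div_self (norm_pos x hxC).ne', one_smul]
  rw [← image_eq]
  refine (hC.inter (convex_closedBall 0 r)).isPreconnected.image _ ?_
  exact (continuousOn_const.div continuousOn_id.norm fun x hx ↦ (norm_pos x hx.1).ne').smul
    continuousOn_id

section InnerProductSpace

variable {ι E : Type*} [NormedAddCommGroup E] [InnerProductSpace ℝ E]

theorem add_mem_closedBall_iff_le_inner {s : ℝ} (hs : 0 ≤ s) (c e u : E) :
    c + u ∈ closedBall e s ↔ (‖e - c‖ ^ 2 + (‖u‖ ^ 2 - s ^ 2)) / 2 ≤ ⟪e - c, u⟫ := by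
  have expand : ‖c + u - e‖ ^ 2 = ‖u‖ ^ 2 - 2 * ⟪e - c, u⟫ + ‖e - c‖ ^ 2 := by
    rw [show c + u - e = u - (e - c) by abel, norm_sub_sq_real, real_inner_comm]
  rw [mem_closedBall_iff_norm, ← sq_le_sq₀ (norm_nonneg _) hs, expand]
  constructor <;> intro h <;> linarith

theorem isPreconnected_iInter_halfSpace_inter_sphere (hE : 1 < Module.rank ℝ E) {v : ι → E}
    {t : ι → ℝ} (ht : ∀ i, 0 ≤ t i) (hv : ∀ i, t i = 0 → v i = 0) (r : ℝ) :
    IsPreconnected ((⋂ i, {u | t i ≤ ⟪v i, u⟫}) ∩ sphere 0 r) := by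
  by_cases h0 : (0 : E) ∈ ⋂ i, {u | t i ≤ ⟪v i, u⟫}
  · have ht0 : ∀ i, t i = 0 := fun i ↦
      le_antisymm ((mem_iInter.1 h0 i).trans_eq (inner_zero_right _)) (ht i)
    have eq_univ : ⋂ i, {u | t i ≤ ⟪v i, u⟫} = univ :=
      iInter_eq_univ.2 fun i ↦ eq_univ_of_forall fun u ↦ by
        rw [mem_ofPred_eq, ht0 i, hv i (ht0 i), inner_zero_left]
    rw [eq_univ, univ_inter]
    exact isPreconnected_sphere hE 0 r
  · have convex_iInter_halfSpace : Convex ℝ (⋂ i, {u | t i ≤ ⟪v i, u⟫}) :=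
      convex_iInter fun i ↦ convex_halfSpace_ge (innerₛₗ ℝ (v i)).isLinear (t i)
    refine isPreconnected_inter_sphere_of_convex convex_iInter_halfSpace h0 (fun x hx a ha ↦ ?_) r
    refine mem_iInter.2 fun i ↦ ?_
    have hxi : t i ≤ ⟪v i, x⟫ := mem_iInter.1 hx i
    rw [mem_ofPred_eq, inner_smul_right]
    exact hxi.trans (le_mul_of_one_le_left ((ht i).trans hxi) ha)

theorem isPreconnected_iInter_closedBall_inter_sphere (hE : 1 < Module.rank ℝ E) {e : ι → E}
    {s : ι → ℝ} {r : ℝ} (hs : ∀ i, s i ∈ Icc 0 r) (c : E) :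
    IsPreconnected ((⋂ i, closedBall (e i) (s i)) ∩ sphere c r) := by
  let t : ι → ℝ := fun i ↦ (‖e i - c‖ ^ 2 + (r ^ 2 - s i ^ 2)) / 2
  have sq_sub_nonneg : ∀ i, 0 ≤ r ^ 2 - s i ^ 2 := fun i ↦
    sub_nonneg.2 (pow_le_pow_left₀ (hs i).1 (hs i).2 2)
  have t_nonneg : ∀ i, 0 ≤ t i := fun i ↦
    div_nonneg (add_nonneg (sq_nonneg _) (sq_sub_nonneg i)) zero_le_two
  have center_eq : ∀ i, t i = 0 → e i - c = 0 := fun i hi ↦ by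
    have hsum : ‖e i - c‖ ^ 2 + (r ^ 2 - s i ^ 2) = 0 :=
      (div_eq_zero_iff.1 hi).resolve_right two_ne_zero
    have hsq : ‖e i - c‖ ^ 2 = 0 :=
      ((add_eq_zero_iff_of_nonneg (sq_nonneg _) (sq_sub_nonneg i)).1 hsum).1
    exact norm_eq_zero.1 (sq_eq_zero_iff.1 hsq)
  have image_eq : (c + ·) '' ((⋂ i, {u | t i ≤ ⟪e i - c, u⟫}) ∩ sphere 0 r) =
      (⋂ i, closedBall (e i) (s i)) ∩ sphere c r := by
    rw [image_add_left]
    ext x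
    simp only [mem_preimage, mem_inter_iff, mem_iInter, mem_ofPred_eq, mem_sphere_iff_norm,
      neg_add_eq_sub, sub_zero]
    refine and_congr_left fun hx ↦ forall_congr' fun i ↦ ?_
    rw [← add_sub_cancel c x, add_mem_closedBall_iff_le_inner (hs i).1, add_sub_cancel, hx]
  rw [← image_eq]
  exact (isPreconnected_iInter_halfSpace_inter_sphere hE t_nonneg center_eq r).image _
    (continuous_const_add c).continuousOn

theorem stmt2_general (hE : 1 < Module.rank ℝ E) {R : Set (Set E)} {r : ℝ}
    (hR : ∀ D ∈ R, ∃ e : E, ∃ s ∈ Icc 0 r, D = closedBall e s) {c : E}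
    (hc : closedBall c r ∈ R) :
    IsPreconnected (frontier (⋂₀ R) ∩ frontier (closedBall c r)) := by
  have : Nontrivial E := rank_pos_iff_nontrivial.1 (zero_lt_one.trans hE)
  choose e s hs hball using fun D : R ↦ hR D D.2
  have sInter_eq : ⋂₀ R = ⋂ D, closedBall (e D) (s D) :=
    sInter_eq_iInter.trans (iInter_congr hball)
  have isClosed_sInter : IsClosed (⋂₀ R) :=
    sInter_eq ▸ isClosed_iInter fun _ ↦ isClosed_closedBall
  rw [frontier_inter_frontier_of_subset isClosed_sInter (sInter_subset_of_mem hc),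
    frontier_closedBall', sInter_eq]
  exact isPreconnected_iInter_closedBall_inter_sphere hE hs c

end InnerProductSpace

theorem stmt2 (R : Set (Set E2)) (hfin : R.Finite)
    (hR : ∀ D ∈ R, ∃ c : E2, D = Metric.closedBall c 1) :
    ∀ D ∈ R, IsPreconnected (frontier (⋂₀ R) ∩ frontier D) := by
  intro D hD
  obtain ⟨c, rfl⟩ := hR D hD
  have one_lt_rank : 1 < Module.rank ℝ E2 := by
    rw [← Module.finrank_eq_rank, finrank_euclideanSpace_fin]
    exact Nat.one_lt_ofNat
  exact stmt2_general one_lt_rank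
    (fun D hD ↦ (hR D hD).imp fun _ h ↦ ⟨1, right_mem_Icc.2 zero_le_one, h⟩) hD
end
end

section
/- Let ℛ be a finite family of closed unit disks in ℝ², let K = ⋂_{D∈ℛ} D, and let C be the circle of radius 1 centered at a point c ∈ ℝ² that is distinct from the center of every disk in ℛ. Then frontier(K) ∩ C contains at most 2 points; that is, a unit circle intersects the boundary of a unit-disk polygon in at most two points. -/
noncomputable section

/-!
A frontier point `y` of the intersection that lies on the circle `C` with centre `c` lies on the
boundary of one of the disks, with centre `e` say. Since this disk is no larger than `C` and is not
bounded by `C`, the functional `⟪e - c, ·⟫` takes a larger value at `y` than at `c`. As every point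
of `C` in the disk is at least as close to `e` as `y` is, `y` minimizes this functional over the
frontier points on `C`. Seen from `c`, three such points would lie in an open half-plane, so one of
them would be a nonnegative combination of the other two. By strict convexity the coefficients add
up to more than `1`, so its functional would be smaller at one of the other two points.
-/

open Module Set Metric
open scoped RealInnerProductSpace

theorem frontier_sInter_subset_biUnion {X : Type*} [TopologicalSpace X] {S : Set (Set X)}
    (hS : S.Finite) : frontier (⋂₀ S) ⊆ ⋃ s ∈ S, frontier s := by
  rintro x ⟨hx_closure, hx_interior⟩
  rw [hS.interior_sInter] at hx_interior
  simp only [mem_iInter, not_forall] at hx_interior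
  obtain ⟨s, hs, hxs⟩ := hx_interior
  exact mem_biUnion hs ⟨closure_mono (sInter_subset_of_mem hs) hx_closure, hxs⟩

section Cone

variable {K V : Type*} [Field K] [AddCommGroup V] [Module K V]

theorem collinear_of_forall_dual_eq (hV : finrank K V = 2) {f : Dual K V} (hf : f ≠ 0) {t : K}
    {s : Set V} (hs : ∀ x ∈ s, f x = t) : Collinear K s := by
  have : FiniteDimensional K V := Module.finite_of_finrank_eq_succ hV
  have span_le : vectorSpan K s ≤ LinearMap.ker f := by
    refine Submodule.span_le.2 ?_
    rintro _ ⟨x, hx, y, hy, rfl⟩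
    simp [hs x hx, hs y hy]
  have finrank_ker := Module.Dual.finrank_ker_add_one_of_ne_zero hf
  have finrank_le := Submodule.finrank_mono span_le
  exact collinear_iff_finrank_le_one.2 (by lia)

variable [LinearOrder K] [IsStrictOrderedRing K]

theorem mem_hull_pair_of_wbtw_smul {x y z : V} {a b d : K} (ha : 0 ≤ a) (hb : 0 < b) (hd : 0 ≤ d)
    (h : Wbtw K (a • x) (b • y) (d • z)) : y ∈ PointedCone.hull K {x, z} := by
  obtain ⟨t, ⟨ht₀, ht₁⟩, ht⟩ := h
  rw [AffineMap.lineMap_apply_module] at ht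
  refine Submodule.mem_span_pair.2
    ⟨⟨b⁻¹ * ((1 - t) * a), by have := sub_nonneg.2 ht₁; positivity⟩,
      ⟨b⁻¹ * (t * d), by positivity⟩, ?_⟩
  change (b⁻¹ * ((1 - t) * a)) • x + (b⁻¹ * (t * d)) • z = y
  rw [← inv_smul_smul₀ hb.ne' y, ← ht]
  module

theorem mem_hull_pair_or_mem_hull_pair_or_mem_hull_pair (hV : finrank K V = 2) {f : Dual K V}
    {x y z : V} (hx : 0 < f x) (hy : 0 < f y) (hz : 0 < f z) :
    y ∈ PointedCone.hull K {x, z} ∨ z ∈ PointedCone.hull K {y, x} ∨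
      x ∈ PointedCone.hull K {z, y} := by
  have hf : f ≠ 0 := by rintro rfl; simp at hx
  have normalized : ∀ p ∈ ({(f x)⁻¹ • x, (f y)⁻¹ • y, (f z)⁻¹ • z} : Set V), f p = 1 := by
    simp [hx.ne', hy.ne', hz.ne']
  have hx' := inv_pos.2 hx
  have hy' := inv_pos.2 hy
  have hz' := inv_pos.2 hz
  exact (collinear_of_forall_dual_eq hV hf normalized).wbtw_or_wbtw_or_wbtw.imp
    (mem_hull_pair_of_wbtw_smul hx'.le hy' hz'.le)
    (.imp (mem_hull_pair_of_wbtw_smul hy'.le hz' hx'.le)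
      (mem_hull_pair_of_wbtw_smul hz'.le hx' hy'.le))

end Cone

section StrictConvex

variable {V : Type*} [NormedAddCommGroup V] [NormedSpace ℝ V] [StrictConvexSpace ℝ V]

theorem eq_or_eq_of_mem_hull_pair {f : Dual ℝ V} {x y z : V} (hxy : ‖x‖ = ‖y‖) (hzy : ‖z‖ = ‖y‖)
    (hf : 0 < f y) (hfx : f y ≤ f x) (hfz : f y ≤ f z) (hy : y ∈ PointedCone.hull ℝ {x, z}) :
    y = x ∨ y = z := by
  obtain ⟨⟨a, ha⟩, ⟨b, hb⟩, hab : a • x + b • z = y⟩ := Submodule.mem_span_pair.1 hy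
  have sum_le : a + b ≤ 1 := by
    refine le_of_mul_le_mul_right ?_ hf
    calc (a + b) * f y = a * f y + b * f y := add_mul ..
      _ ≤ a * f x + b * f z := by gcongr
      _ = 1 * f y := by rw [← hab]; simp
  have norm_pos : 0 < ‖y‖ := norm_pos_iff.2 (by rintro rfl; simp at hf)
  have le_sum : 1 ≤ a + b := by
    refine le_of_mul_le_mul_right ?_ norm_pos
    calc 1 * ‖y‖ = ‖a • x + b • z‖ := by rw [hab, one_mul]
      _ ≤ ‖a • x‖ + ‖b • z‖ := norm_add_le ..
      _ = (a + b) * ‖y‖ := by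
        rw [norm_smul_of_nonneg ha, norm_smul_of_nonneg hb, hxy, hzy, add_mul]
  have wbtw : Wbtw ℝ x y z := by
    rw [Wbtw, affineSegment_eq_segment]
    exact ⟨a, b, ha, hb, sum_le.antisymm le_sum, hab⟩
  by_contra! hne
  have sbtw : Sbtw ℝ x y z := ⟨wbtw, hne⟩
  simpa [hxy, hzy] using sbtw.dist_lt_max_dist 0

theorem encard_le_two_of_forall_exists_isMinOn (hV : finrank ℝ V = 2) {s : Set V} {c : V} {r : ℝ}
    (hs : s ⊆ sphere c r) (hmin : ∀ y ∈ s, ∃ f : Dual ℝ V, f c < f y ∧ IsMinOn f s y) :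
    s.encard ≤ 2 := by
  have notMem_hull : ∀ x ∈ s, ∀ y ∈ s, ∀ z ∈ s, y ≠ x → y ≠ z →
      y - c ∉ PointedCone.hull ℝ {x - c, z - c} := by
    intro x hx y hy z hz hyx hyz hmem
    obtain ⟨f, hfc, hfy⟩ := hmin y hy
    have norm_sub_eq : ∀ p ∈ s, ‖p - c‖ = r := fun p hp ↦ mem_sphere_iff_norm.1 (hs hp)
    have := eq_or_eq_of_mem_hull_pair (f := f)
      ((norm_sub_eq x hx).trans (norm_sub_eq y hy).symm)
      ((norm_sub_eq z hz).trans (norm_sub_eq y hy).symm)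
      (by simpa using hfc) (by simpa using hfy hx) (by simpa using hfy hz) hmem
    exact this.elim (fun h ↦ hyx (sub_left_injective h)) (fun h ↦ hyz (sub_left_injective h))
  by_contra! hcard
  obtain ⟨t, hts, ht⟩ := exists_subset_encard_eq (Order.add_one_le_of_lt hcard)
  obtain ⟨x, y, z, hxy, hxz, hyz, rfl⟩ := encard_eq_three.1 (ht.trans two_add_one_eq_three)
  obtain ⟨hx, hy, hz⟩ : x ∈ s ∧ y ∈ s ∧ z ∈ s := by simpa [insert_subset_iff] using hts
  obtain ⟨f, hfc, hfx⟩ := hmin x hx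
  have pos : ∀ p ∈ s, 0 < f (p - c) := fun p hp ↦ by simpa using hfc.trans_le (hfx hp)
  rcases mem_hull_pair_or_mem_hull_pair_or_mem_hull_pair hV (pos x hx) (pos y hy) (pos z hz)
    with h | h | h
  · exact notMem_hull x hx y hy z hz hxy.symm hyz h
  · exact notMem_hull y hy z hz x hx hyz.symm hxz.symm h
  · exact notMem_hull z hz x hx y hy hxz hxy h

end StrictConvex

section InnerProduct

variable {V : Type*} [NormedAddCommGroup V] [InnerProductSpace ℝ V]

theorem two_mul_inner_sub_sub (c e x : V) :
    2 * ⟪e - c, x - c⟫ = dist e c ^ 2 + dist x c ^ 2 - dist x e ^ 2 := by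
  rw [dist_eq_norm, dist_eq_norm, dist_eq_norm, ← sub_sub_sub_cancel_right x e c,
    norm_sub_sq_real (x - c), real_inner_comm]
  ring

theorem inner_sub_le_inner_sub_of_dist_le {c e x y : V} (hc : dist y c ≤ dist x c)
    (he : dist x e ≤ dist y e) : ⟪e - c, y⟫ ≤ ⟪e - c, x⟫ := by
  have hx := two_mul_inner_sub_sub c e x
  have hy := two_mul_inner_sub_sub c e y
  rw [inner_sub_right] at hx hy
  have hc' : dist y c ^ 2 ≤ dist x c ^ 2 := by gcongr
  have he' : dist x e ^ 2 ≤ dist y e ^ 2 := by gcongr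
  linarith

theorem inner_sub_lt_inner_sub_of_dist_le {c e y : V} (hce : c ≠ e) (hy : dist y e ≤ dist y c) :
    ⟪e - c, c⟫ < ⟪e - c, y⟫ := by
  have hinner := two_mul_inner_sub_sub c e y
  rw [inner_sub_right] at hinner
  have hy' : dist y e ^ 2 ≤ dist y c ^ 2 := by gcongr
  have hpos : 0 < dist e c ^ 2 := pow_pos (dist_pos.2 hce.symm) 2
  linarith

theorem stmt3_general (hV : finrank ℝ V = 2) {R : Set (Set V)} (hfin : R.Finite) {c : V} {r : ℝ}
    (hR : ∀ D ∈ R, ∃ e, ∃ ρ ≤ r, D = closedBall e ρ) (hc : closedBall c r ∉ R) :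
    (frontier (⋂₀ R) ∩ sphere c r).encard ≤ 2 := by
  refine encard_le_two_of_forall_exists_isMinOn hV inter_subset_right ?_
  rintro y ⟨hyR, hyc : dist y c = r⟩
  obtain ⟨D, hD, hyD⟩ := mem_iUnion₂.1 (frontier_sInter_subset_biUnion hfin hyR)
  obtain ⟨e, ρ, hρ, rfl⟩ := hR D hD
  have hye : dist y e = ρ := frontier_closedBall_subset_sphere hyD
  have hce : c ≠ e := by
    rintro rfl
    rw [← hye, hyc] at hD
    exact hc hD
  refine ⟨innerₛₗ ℝ (e - c),
    inner_sub_lt_inner_sub_of_dist_le hce (hye.trans_le (hρ.trans_eq hyc.symm)), ?_⟩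
  rintro x ⟨hxR, hxc : dist x c = r⟩
  have hxe : dist x e ≤ ρ := closure_minimal (sInter_subset_of_mem hD) isClosed_closedBall
    (frontier_subset_closure hxR)
  exact inner_sub_le_inner_sub_of_dist_le (hyc.trans hxc.symm).le (hxe.trans_eq hye.symm)

end InnerProduct

theorem stmt3 (R : Set (Set E2)) (hfin : R.Finite)
    (hR : ∀ D ∈ R, ∃ c : E2, D = Metric.closedBall c 1)
    (c : E2) (hc : ∀ D ∈ R, ∀ d : E2, D = Metric.closedBall d 1 → c ≠ d) :
    (frontier (⋂₀ R) ∩ Metric.sphere c 1).encard ≤ 2 :=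
  stmt3_general finrank_euclideanSpace_fin hfin
    (fun D hD ↦ (hR D hD).imp fun _ he ↦ ⟨1, le_rfl, he⟩) fun h ↦ hc _ h c rfl rfl
end
end

section
/- There exists a constant c > 0 such that the following holds: for every finite indexed family 𝒟 = (D_i)_{i∈I} of n closed unit disks in ℝ² with pairwise distinct centers, and every natural number k, the number of points x ∈ ℝ² that lie on the boundary circles of at least two of the disks and satisfy λ(x,𝒟) ≤ k is at most c·n·(k+1). (The complexity of the at-most-k level A_{≤k}(𝒟) of the arrangement of the disks is O(nk).) -/
noncomputable section

/-- The level λ(x,𝒟) of a point with respect to an indexed family of sets: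
the number of indices `i` with `x ∉ D i`. -/
def level {I : Type*} (D : I → Set E2) (x : E2) : ℕ := {i | x ∉ D i}.ncard

/-!
On one circle `C` it suffices to find three guards among the vertices of level at most `k` such that
every other such vertex, lying on a second circle `C₁`, has a guard outside the disk bounded by
`C₁`: each guard is outside at most `k` disks and two circles meet at most twice, so `C` carries at
most `3 (1 + 2 k)` of these vertices. Take any vertex `p` as the first guard, and on each of the two
half circles starting at `p` the vertex farthest from `p`. Every other vertex then lies strictly
between `p` and another guard on an arc of at most a half circle. Because the radii are equal, a
disk different from the one bounded by `C` meets `C` in less than a half circle, so when it contains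
both of these guards it contains the vertex in its interior.
-/

open Metric Module Set
open scoped RealInnerProductSpace

lemma mul_le_mul_of_sq_add_sq_eq {a b c d : ℝ} (h : a ^ 2 + b ^ 2 = c ^ 2 + d ^ 2)
    (hb : 0 ≤ b) (hd : 0 ≤ d) (hca : c ≤ a) : b * c ≤ a * d := by
  rw [mul_comm a]
  rcases le_total 0 a with ha | ha
  · rcases le_total c 0 with hc | hc
    · exact (mul_nonpos_of_nonneg_of_nonpos hb hc).trans (mul_nonneg hd ha)
    · have hsq : c ^ 2 ≤ a ^ 2 := pow_le_pow_left₀ hc hca 2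
      have hbd : b ≤ d := le_of_sq_le_sq (by linarith) hd
      exact mul_le_mul hbd hca hc hd
  · have hsq : a ^ 2 ≤ c ^ 2 := by nlinarith
    have hdb : d ≤ b := le_of_sq_le_sq (by linarith) hb
    exact (mul_le_mul_of_nonneg_left hca hb).trans (mul_le_mul_of_nonpos_right hdb ha)

lemma encard_biUnion_le_mul {ι α : Type*} {t : Set ι} (ht : t.Finite) {s : ι → Set α} {m : ℕ∞}
    (hs : ∀ i ∈ t, (s i).encard ≤ m) : (⋃ i ∈ t, s i).encard ≤ t.encard * m := by
  lift t to Finset ι using ht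
  calc (⋃ i ∈ t, s i).encard ≤ ∑ i ∈ t, (s i).encard := t.set_encard_biUnion_le s
    _ ≤ t.card • m := t.sum_le_card_nsmul _ m hs
    _ = (t : Set ι).encard * m := by rw [encard_coe_eq_coe_finsetCard, nsmul_eq_mul]

section InnerProductSpace

variable {V : Type*} [NormedAddCommGroup V] [InnerProductSpace ℝ V]

lemma dist_sq_eq_dist_sq_sub_inner (x c d : V) :
    dist x d ^ 2 = dist x c ^ 2 - 2 * ⟪x - c, d - c⟫ + dist d c ^ 2 := by
  rw [dist_eq_norm, dist_eq_norm, dist_eq_norm, ← norm_sub_sq_real, sub_sub_sub_cancel_right]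

lemma dist_le_dist_iff_inner_le_inner {x y c d : V} (h : dist x c = dist y c) :
    dist x d ≤ dist y d ↔ ⟪y - c, d - c⟫ ≤ ⟪x - c, d - c⟫ := by
  rw [← sq_le_sq₀ dist_nonneg dist_nonneg, dist_sq_eq_dist_sq_sub_inner x c,
    dist_sq_eq_dist_sq_sub_inner y c, h]
  constructor <;> intro <;> linarith

lemma inner_sub_sub_pos_of_dist_eq {x c d : V} (hcd : c ≠ d) (h : dist x c = dist x d) :
    0 < ⟪x - c, d - c⟫ := by
  have hdc : 0 < dist d c ^ 2 := pow_pos (dist_pos.2 hcd.symm) 2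
  have hsq := dist_sq_eq_dist_sq_sub_inner x c d
  rw [h] at hsq
  linarith

lemma real_inner_lt_norm_sq_of_norm_eq {u v : V} (h : ‖u‖ = ‖v‖) (huv : u ≠ v) :
    ⟪u, v⟫ < ‖v‖ ^ 2 := by
  have hpos : 0 < ‖u - v‖ ^ 2 := pow_pos (norm_pos_iff.2 (sub_ne_zero.2 huv)) 2
  rw [norm_sub_sq_real, h] at hpos
  linarith

end InnerProductSpace

section Plane

variable {V : Type*} [NormedAddCommGroup V] [InnerProductSpace ℝ V] [Fact (finrank ℝ V = 2)]

section Oriented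

variable (o : Orientation ℝ V (Fin 2))

local notation "ω" => o.areaForm

lemma areaForm_mul_inner_eq (u v a w : V) :
    ω u v * ⟪a, w⟫ = ω a v * ⟪u, w⟫ + ω u a * ⟪v, w⟫ := by
  rcases eq_or_ne w 0 with rfl | hw
  · simp
  -- Both sides are polynomials in the coordinates of `u`, `v`, `a` along `w` and its rotation.
  have hw2 : ‖w‖ ^ 2 ≠ 0 := pow_ne_zero 2 (norm_ne_zero_iff.2 hw)
  apply mul_left_cancel₀ hw2
  simp only [real_inner_comm w]
  linear_combination -⟪w, a⟫ * o.inner_mul_areaForm_sub w u v +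
    ⟪w, u⟫ * o.inner_mul_areaForm_sub w a v + ⟪w, v⟫ * o.inner_mul_areaForm_sub w u a

lemma areaForm_nonneg_of_inner_le_inner {a u v : V} (ha : a ≠ 0) (huv : ‖u‖ = ‖v‖)
    (hu : 0 ≤ ω a u) (hv : 0 ≤ ω a v) (h : ⟪a, v⟫ ≤ ⟪a, u⟫) : 0 ≤ ω u v := by
  have hsq : ⟪a, u⟫ ^ 2 + ω a u ^ 2 = ⟪a, v⟫ ^ 2 + ω a v ^ 2 := by
    rw [o.inner_sq_add_areaForm_sq, o.inner_sq_add_areaForm_sq, huv]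
  have hmul : 0 ≤ ‖a‖ ^ 2 * ω u v := by
    rw [← o.inner_mul_areaForm_sub, sub_nonneg]
    exact mul_le_mul_of_sq_add_sq_eq hsq hu hv h
  exact nonneg_of_mul_nonneg_right hmul (pow_pos (norm_pos_iff.2 ha) 2)

lemma areaForm_ne_zero_of_inner_le_inner {a u w : V} (hnorm : ‖a‖ = ‖u‖) (hne : a ≠ u)
    (hw : 0 < ⟪u, w⟫) (hle : ⟪u, w⟫ ≤ ⟪a, w⟫) : ω a u ≠ 0 := by
  intro hω
  have hau : ⟪a, u⟫ < 0 := by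
    by_contra! h
    have hray := (o.nonneg_inner_and_areaForm_eq_zero_iff_sameRay a u).1 ⟨h, hω⟩
    exact hne (hray.eq_of_norm_eq hnorm)
  have hmul : ⟪a, u⟫ * ⟪a, w⟫ = ‖a‖ ^ 2 * ⟪u, w⟫ := by
    rw [← o.inner_mul_inner_add_areaForm_mul_areaForm, hω, zero_mul, add_zero]
  have hneg : ⟪a, u⟫ * ⟪a, w⟫ < 0 := mul_neg_of_neg_of_pos hau (hw.trans_le hle)
  have hnonneg : 0 ≤ ‖a‖ ^ 2 * ⟪u, w⟫ := mul_nonneg (sq_nonneg _) hw.le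
  exact (hmul ▸ hneg).not_ge hnonneg

lemma inner_lt_inner_of_areaForm_nonneg {a u v w : V} (ha : ‖a‖ = ‖u‖) (hv : ‖v‖ = ‖u‖)
    (hau : a ≠ u) (hvu : v ≠ u) (hωau : 0 ≤ ω a u) (hωuv : 0 ≤ ω u v)
    (hw : 0 < ⟪u, w⟫) (hle : ⟪u, w⟫ ≤ ⟪a, w⟫) : ⟪v, w⟫ < ⟪u, w⟫ := by
  by_contra! hle'
  have hpos : 0 < ω a u := hωau.lt_of_ne' (areaForm_ne_zero_of_inner_le_inner o ha hau hw hle)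
  -- `ω a v • u = ω u v • a + ω a u • v`, paired with `w` and with `u`, bounds `ω a v` both ways.
  have hge : ω u v + ω a u ≤ ω a v := by
    refine le_of_mul_le_mul_right ?_ hw
    rw [areaForm_mul_inner_eq o a v u w, add_mul]
    gcongr
  have hlt : ω a v < ω u v + ω a u := by
    have hu := areaForm_mul_inner_eq o a v u u
    rw [real_inner_self_eq_norm_sq] at hu
    have hau' := real_inner_lt_norm_sq_of_norm_eq ha hau
    have hvu' := real_inner_lt_norm_sq_of_norm_eq hv hvu
    refine lt_of_mul_lt_mul_right ?_ (sq_nonneg ‖u‖)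
    rw [hu, add_mul]
    exact add_lt_add_of_le_of_lt (mul_le_mul_of_nonneg_left hau'.le hωuv)
      (mul_lt_mul_of_pos_left hvu' hpos)
  exact hge.not_gt hlt

lemma notMem_closedBall_of_areaForm_nonneg {c d p x q : V} {r : ℝ} (hcd : c ≠ d)
    (hpc : p ∈ sphere c r) (hxc : x ∈ sphere c r) (hqc : q ∈ sphere c r) (hpx : p ≠ x)
    (hqx : q ≠ x) (hωpx : 0 ≤ ω (p - c) (x - c)) (hωxq : 0 ≤ ω (x - c) (q - c))
    (hxd : x ∈ sphere d r) (hpd : p ∈ closedBall d r) : q ∉ closedBall d r := by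
  rw [mem_sphere] at hpc hxc hqc hxd
  rw [mem_closedBall, ← hxd] at hpd ⊢
  rw [dist_le_dist_iff_inner_le_inner (hpc.trans hxc.symm)] at hpd
  rw [dist_le_dist_iff_inner_le_inner (hqc.trans hxc.symm), not_le]
  refine inner_lt_inner_of_areaForm_nonneg o ?_ ?_ (sub_left_injective.ne hpx)
    (sub_left_injective.ne hqx) hωpx hωxq
    (inner_sub_sub_pos_of_dist_eq hcd (hxc.trans hxd.symm)) hpd
  · rw [← dist_eq_norm, ← dist_eq_norm, hpc, hxc]
  · rw [← dist_eq_norm, ← dist_eq_norm, hqc, hxc]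

lemma exists_areaForm_nonneg_of_finite {c p : V} {r : ℝ} {F : Set V} (hF : F.Finite)
    (hFc : F ⊆ sphere c r) (hp : p ∈ F) :
    ∃ q ∈ F, ∀ x ∈ F, x ≠ p → 0 ≤ ω (p - c) (x - c) → 0 ≤ ω (x - c) (q - c) := by
  have hp' : p ∈ {x ∈ F | 0 ≤ ω (p - c) (x - c)} := ⟨hp, (o.areaForm_apply_self _).ge⟩
  obtain ⟨q, ⟨hqF, hωq⟩, hmin⟩ :=
    exists_min_image _ (fun x ↦ ⟪p - c, x - c⟫) (hF.subset (sep_subset _ _)) ⟨p, hp'⟩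
  refine ⟨q, hqF, fun x hxF hxp hωx ↦ ?_⟩
  have hpc := mem_sphere.1 (hFc hp)
  have hxc := mem_sphere.1 (hFc hxF)
  have hpc0 : p - c ≠ 0 := by
    intro h
    obtain rfl := sub_eq_zero.1 h
    rw [← hpc, dist_self] at hxc
    exact hxp (dist_eq_zero.1 hxc)
  have hnorm : ‖x - c‖ = ‖q - c‖ := by
    rw [← dist_eq_norm, ← dist_eq_norm, hxc, mem_sphere.1 (hFc hqF)]
  exact areaForm_nonneg_of_inner_le_inner o hpc0 hnorm hωx hωq (hmin x ⟨hxF, hωx⟩)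

end Oriented

lemma exists_guards_of_finite_subset_sphere {c : V} {r : ℝ} {F : Set V} (hF : F.Finite)
    (hFc : F ⊆ sphere c r) :
    ∃ G ⊆ F, G.encard ≤ 3 ∧
      ∀ x ∈ F \ G, ∀ d ≠ c, x ∈ sphere d r → ∃ g ∈ G, g ∉ closedBall d r := by
  rcases F.eq_empty_or_nonempty with rfl | ⟨p, hp⟩
  · exact ⟨∅, by simp⟩
  have : FiniteDimensional ℝ V := .of_fact_finrank_eq_two
  let o : Orientation ℝ V (Fin 2) := (finBasisOfFinrankEq ℝ V Fact.out).orientation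
  obtain ⟨q, hq, hωq⟩ := exists_areaForm_nonneg_of_finite o hF hFc hp
  obtain ⟨q', hq', hωq'⟩ := exists_areaForm_nonneg_of_finite (-o) hF hFc hp
  have hG : ({p, q, q'} : Set V) ⊆ F := by
    simp only [insert_subset_iff, singleton_subset_iff]
    exact ⟨hp, hq, hq'⟩
  refine ⟨{p, q, q'}, hG, ?_, fun x ⟨hxF, hxG⟩ d hd hxd ↦ ?_⟩
  · calc ({p, q, q'} : Set V).encard ≤ ({q, q'} : Set V).encard + 1 := encard_insert_le _ _
      _ ≤ 1 + 1 + 1 := by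
        gcongr
        exact (encard_insert_le _ _).trans_eq (by rw [encard_singleton])
      _ = 3 := by norm_num
  simp only [mem_insert_iff, mem_singleton_iff, not_or] at hxG
  obtain ⟨hxp, hxq, hxq'⟩ := hxG
  by_contra! hcon
  have hpd : p ∈ closedBall d r := hcon p (by simp)
  rcases le_total 0 (o.areaForm (p - c) (x - c)) with hω | hω
  · exact notMem_closedBall_of_areaForm_nonneg o hd.symm (hFc hp) (hFc hxF) (hFc hq) (Ne.symm hxp)
      (Ne.symm hxq) hω (hωq x hxF hxp hω) hxd hpd (hcon q (by simp))
  · replace hω : 0 ≤ (-o).areaForm (p - c) (x - c) := by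
      simpa [o.areaForm_neg_orientation] using hω
    exact notMem_closedBall_of_areaForm_nonneg (-o) hd.symm (hFc hp) (hFc hxF) (hFc hq')
      (Ne.symm hxp) (Ne.symm hxq') hω (hωq' x hxF hxp hω) hxd hpd (hcon q' (by simp))

lemma encard_sphere_inter_sphere_le_two {c d : V} (hcd : c ≠ d) (r₁ r₂ : ℝ) :
    (sphere c r₁ ∩ sphere d r₂).encard ≤ 2 := by
  have : FiniteDimensional ℝ V := .of_fact_finrank_eq_two
  by_contra! h
  obtain ⟨p₁, p₂, hp₁, hp₂, hne⟩ := one_lt_encard_iff.1 (lt_trans (by norm_num) h)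
  refine h.not_ge ((encard_le_encard fun p hp ↦ ?_).trans (encard_pair hne).le)
  exact EuclideanGeometry.eq_of_dist_eq_of_dist_eq_of_finrank_eq_two Fact.out hcd hne
    hp₁.1 hp₂.1 hp.1 hp₁.2 hp₂.2 hp.2

section Arrangement

variable {I : Type*} {ctr : I → V}

lemma encard_sphere_inter_iUnion_sphere_le (hctr : Function.Injective ctr) (r : ℝ)
    {t : Set I} (ht : t.Finite) {i : I} (hi : i ∉ t) :
    (⋃ j ∈ t, sphere (ctr i) r ∩ sphere (ctr j) r).encard ≤ t.encard * 2 :=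
  encard_biUnion_le_mul ht fun _ hj ↦
    encard_sphere_inter_sphere_le_two (hctr.ne (ne_of_mem_of_not_mem hj hi).symm) r r

lemma encard_shallow_vertices_on_sphere_le [Finite I] (hctr : Function.Injective ctr) (r : ℝ)
    (i : I) (k : ℕ) :
    {x ∈ sphere (ctr i) r | (∃ j ≠ i, x ∈ sphere (ctr j) r) ∧
      {j | x ∉ closedBall (ctr j) r}.ncard ≤ k}.encard ≤ 3 * (1 + k * 2) := by
  set F := {x ∈ sphere (ctr i) r | (∃ j ≠ i, x ∈ sphere (ctr j) r) ∧
    {j | x ∉ closedBall (ctr j) r}.ncard ≤ k}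
  have hFc : F ⊆ sphere (ctr i) r := sep_subset _ _
  have hF : F.Finite := by
    have hfin : (⋃ j ∈ ({i}ᶜ : Set I), sphere (ctr i) r ∩ sphere (ctr j) r).Finite :=
      (toFinite _).biUnion fun j hj ↦ finite_of_encard_le_coe
        (encard_sphere_inter_sphere_le_two (hctr.ne (Ne.symm hj)) r r)
    exact hfin.subset fun x ⟨hxi, ⟨j, hji, hxj⟩, _⟩ ↦ mem_biUnion hji ⟨hxi, hxj⟩
  obtain ⟨G, hGF, hG, hguard⟩ := exists_guards_of_finite_subset_sphere hF hFc
  let N (g : V) : Set V :=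
    {g} ∪ ⋃ j ∈ {j | g ∉ closedBall (ctr j) r}, sphere (ctr i) r ∩ sphere (ctr j) r
  have hcover : F ⊆ ⋃ g ∈ G, N g := by
    intro x hx
    by_cases hxG : x ∈ G
    · exact mem_biUnion hxG (.inl rfl)
    · obtain ⟨j, hji, hxj⟩ := hx.2.1
      obtain ⟨g, hg, hgj⟩ := hguard x ⟨hx, hxG⟩ (ctr j) (hctr.ne hji) hxj
      exact mem_biUnion hg (.inr (mem_biUnion hgj ⟨hx.1, hxj⟩))
  have hN : ∀ g ∈ G, (N g).encard ≤ 1 + k * 2 := by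
    intro g hg
    have hgi : i ∉ {j | g ∉ closedBall (ctr j) r} :=
      not_not.2 (sphere_subset_closedBall (hFc (hGF hg)))
    have hlevel : {j | g ∉ closedBall (ctr j) r}.encard ≤ k := by
      rw [← (toFinite _).cast_ncard_eq]
      exact_mod_cast (hGF hg).2.2
    calc (N g).encard ≤ _ := encard_union_le _ _
      _ ≤ 1 + {j | g ∉ closedBall (ctr j) r}.encard * 2 := by
        rw [encard_singleton]
        gcongr
        exact encard_sphere_inter_iUnion_sphere_le hctr r (toFinite _) hgi
      _ ≤ 1 + k * 2 := by gcongr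
  calc F.encard ≤ (⋃ g ∈ G, N g).encard := encard_le_encard hcover
    _ ≤ G.encard * (1 + k * 2) := encard_biUnion_le_mul (hF.subset hGF) hN
    _ ≤ 3 * (1 + k * 2) := by gcongr

end Arrangement

theorem stmt4_general {I : Type*} [Fintype I] {ctr : I → V} (hctr : Function.Injective ctr)
    (r : ℝ) (k : ℕ) :
    {x : V | (∃ i j : I, i ≠ j ∧ x ∈ frontier (closedBall (ctr i) r) ∧
        x ∈ frontier (closedBall (ctr j) r)) ∧
      {i | x ∉ closedBall (ctr i) r}.ncard ≤ k}.encard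
      ≤ ((6 * Fintype.card I * (k + 1) : ℕ) : ℕ∞) := by
  let S (i : I) : Set V := {x ∈ sphere (ctr i) r | (∃ j ≠ i, x ∈ sphere (ctr j) r) ∧
    {j | x ∉ closedBall (ctr j) r}.ncard ≤ k}
  calc _ ≤ (⋃ i ∈ univ, S i).encard := by
        refine encard_le_encard fun x ⟨⟨i, j, hij, hxi, hxj⟩, hk⟩ ↦ mem_biUnion (mem_univ i) ?_
        exact ⟨frontier_closedBall_subset_sphere hxi,
          ⟨j, hij.symm, frontier_closedBall_subset_sphere hxj⟩, hk⟩
    _ ≤ (univ : Set I).encard * (3 * (1 + k * 2)) := encard_biUnion_le_mul finite_univ fun i _ ↦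
        encard_shallow_vertices_on_sphere_le hctr r i k
    _ = ((Fintype.card I * (3 * (1 + k * 2)) : ℕ) : ℕ∞) := by
        rw [encard_univ, ENat.card_eq_coe_fintype_card]
        push_cast
        rfl
    _ ≤ _ := by
        rw [Nat.cast_le]
        nlinarith

end Plane

theorem stmt4 :
    ∃ c : ℕ, 0 < c ∧
      ∀ (I : Type) [Fintype I] (ctr : I → E2), Function.Injective ctr →
        ∀ k : ℕ,
          {x : E2 |
              (∃ i j : I, i ≠ j ∧
                x ∈ frontier (Metric.closedBall (ctr i) 1) ∧
                x ∈ frontier (Metric.closedBall (ctr j) 1)) ∧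
              level (fun i => Metric.closedBall (ctr i) 1) x ≤ k}.encard
            ≤ ((c * Fintype.card I * (k + 1) : ℕ) : ℕ∞) := by
  have : Fact (finrank ℝ E2 = 2) := ⟨finrank_euclideanSpace_fin⟩
  exact ⟨6, by norm_num, fun I _ ctr hctr k ↦ stmt4_general hctr 1 k⟩
end
end

section
/- There exists a constant c > 0 such that the following holds: for every finite indexed family 𝒟 of closed unit disks in ℝ² and every natural number k, the set A_{≤k}(𝒟) = {x ∈ ℝ² : λ(x,𝒟) ≤ k}, regarded as a topological subspace of ℝ², has at most c·(k+1)² connected components. -/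
noncomputable section

/-- A_{≤k}(𝒟): points of level at most k. -/
def levelSetLE {I : Type*} (D : I → Set E2) (k : ℕ) : Set E2 := {x | level D x ≤ k}

/-!
Every component of the `(≤ k)`-level of a family of closed convex sets in dimension `d` contains a
point `p` at which the squared norm is minimal on the intersection of all members containing `p`.
By Helly's theorem this minimality is already forced by a set `B` of at most `d` members, while `p`
misses a set `X` of at most `k` members. If each of two such points lies in the members witnessing
the minimality of the other, strict convexity makes them equal. So the pairs `(B, X)` satisfy the
hypothesis of Tuza's inequality: a random subset containing each index with probability `q`
contains `B` and avoids `X` for at most one pair. Taking `q = 1 / (2 * (k + 1))` bounds the number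
of pairs by `O((k + 1) ^ d)`.
-/

open Finset Module Set

section Tuza

variable {ι τ R : Type*} {t : Finset τ} {A B : τ → Finset ι}

lemma sum_Icc_pow_card_mul_pow_card_sdiff [DecidableEq ι] [CommSemiring R] {s t U : Finset ι}
    (hst : s ⊆ t) (htU : t ⊆ U) (a b : R) :
    ∑ u ∈ Finset.Icc s t, a ^ #u * b ^ #(U \ u) = a ^ #s * b ^ #(U \ t) * (a + b) ^ #(t \ s) := by
  have union_inj : InjOn (s ∪ ·) ((t \ s).powerset : Set (Finset ι)) := by
    intro u hu v hv (huv : s ∪ u = s ∪ v)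
    rw [← union_sdiff_cancel_left (disjoint_sdiff.mono_right (Finset.mem_powerset.mp hu)), huv,
      union_sdiff_cancel_left (disjoint_sdiff.mono_right (Finset.mem_powerset.mp hv))]
  rw [Finset.Icc_eq_image_powerset hst, sum_image union_inj, ← Finset.sum_pow_mul_eq_add_pow,
    mul_sum]
  refine sum_congr rfl fun u hu ↦ ?_
  have hu := Finset.mem_powerset.mp hu
  have card_union : #(s ∪ u) = #s + #u := card_union_of_disjoint (disjoint_sdiff.mono_right hu)
  have card_sdiff : #(U \ (s ∪ u)) = #(U \ t) + (#(t \ s) - #u) := by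
    rw [← card_sdiff_of_subset hu, ← card_union_of_disjoint]
    · congr 1
      grind
    · grind [Finset.disjoint_left]
  rw [card_union, card_sdiff, pow_add, pow_add]
  ring

theorem tuza_inequality [CommSemiring R] [PartialOrder R] [IsOrderedRing R]
    (disj : ∀ a ∈ t, Disjoint (A a) (B a))
    (cross : (t : Set τ).Pairwise fun a b ↦ ¬ (Disjoint (A a) (B b) ∧ Disjoint (A b) (B a)))
    {p q : R} (hp : 0 ≤ p) (hq : 0 ≤ q) (hpq : p + q = 1) :
    ∑ a ∈ t, p ^ #(A a) * q ^ #(B a) ≤ 1 := by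
  classical
  set U : Finset ι := t.biUnion fun a ↦ A a ∪ B a
  have subset_U : ∀ a ∈ t, A a ∪ B a ⊆ U := fun a ha ↦
    subset_biUnion_of_mem (fun a ↦ A a ∪ B a) ha
  have intervals_disjoint :
      (t : Set τ).PairwiseDisjoint fun a ↦ Finset.Icc (A a) (U \ B a) := by
    intro a ha b hb hab
    refine Finset.disjoint_left.mpr fun u hua hub ↦ cross ha hb hab ?_
    obtain ⟨hAa, hBa⟩ := Finset.mem_Icc.mp hua
    obtain ⟨hAb, hBb⟩ := Finset.mem_Icc.mp hub
    exact ⟨disjoint_sdiff_self_left.mono_left (hAa.trans hBb),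
      disjoint_sdiff_self_left.mono_left (hAb.trans hBa)⟩
  calc ∑ a ∈ t, p ^ #(A a) * q ^ #(B a)
      = ∑ a ∈ t, ∑ u ∈ Finset.Icc (A a) (U \ B a), p ^ #u * q ^ #(U \ u) :=
        sum_congr rfl fun a ha ↦ by
          obtain ⟨hAU, hBU⟩ := Finset.union_subset_iff.mp (subset_U a ha)
          rw [sum_Icc_pow_card_mul_pow_card_sdiff (Finset.subset_sdiff.mpr ⟨hAU, disj a ha⟩)
            sdiff_subset, hpq, one_pow, mul_one, Finset.sdiff_sdiff_eq_self hBU]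
    _ = ∑ u ∈ t.biUnion fun a ↦ Finset.Icc (A a) (U \ B a), p ^ #u * q ^ #(U \ u) :=
        (sum_biUnion intervals_disjoint).symm
    _ ≤ ∑ u ∈ U.powerset, p ^ #u * q ^ #(U \ u) := by
        refine sum_le_sum_of_subset_of_nonneg (biUnion_subset.mpr fun a _ u hu ↦ ?_)
          fun u _ _ ↦ by positivity
        exact Finset.mem_powerset.mpr ((Finset.mem_Icc.mp hu).2.trans sdiff_subset)
    _ = ∑ u ∈ U.powerset, p ^ #u * q ^ (#U - #u) :=
        sum_congr rfl fun u hu ↦ by rw [card_sdiff_of_subset (Finset.mem_powerset.mp hu)]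
    _ = 1 := by rw [Finset.sum_pow_mul_eq_add_pow, hpq, one_pow]

lemma half_le_one_sub_pow (k : ℕ) : (1 / 2 : ℝ) ≤ (1 - 1 / (2 * (k + 1))) ^ k := by
  have hk : (k : ℝ) * (1 / (2 * (k + 1))) ≤ 1 / 2 := by field_simp; linarith
  have hq : (1 : ℝ) / (2 * (k + 1)) ≤ 1 := by field_simp; linarith [k.cast_nonneg (α := ℝ)]
  calc (1 / 2 : ℝ) ≤ 1 + k * -(1 / (2 * (k + 1))) := by linarith
    _ ≤ (1 + -(1 / (2 * (k + 1)))) ^ k := one_add_mul_le_pow (by linarith) k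
    _ = (1 - 1 / (2 * (k + 1))) ^ k := by rw [← sub_eq_add_neg]

theorem card_le_of_cross_intersecting {d k : ℕ}
    (card_A : ∀ a ∈ t, #(A a) ≤ d) (card_B : ∀ a ∈ t, #(B a) ≤ k)
    (disj : ∀ a ∈ t, Disjoint (A a) (B a))
    (cross : (t : Set τ).Pairwise fun a b ↦ ¬ (Disjoint (A a) (B b) ∧ Disjoint (A b) (B a))) :
    #t ≤ 2 ^ (d + 1) * (k + 1) ^ d := by
  set q : ℝ := 1 / (2 * (k + 1)) with q_def
  have q_nonneg : 0 ≤ q := by positivity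
  have q_le_one : q ≤ 1 := by rw [q_def]; field_simp; linarith [k.cast_nonneg (α := ℝ)]
  have term_ge : ∀ a ∈ t, q ^ d * (1 / 2) ≤ q ^ #(A a) * (1 - q) ^ #(B a) := fun a ha ↦
    mul_le_mul (pow_le_pow_of_le_one q_nonneg q_le_one (card_A a ha))
      ((half_le_one_sub_pow k).trans
        (pow_le_pow_of_le_one (sub_nonneg.mpr q_le_one) (sub_le_self _ q_nonneg) (card_B a ha)))
      (by norm_num) (by positivity)
  have : (#t : ℝ) * (q ^ d * (1 / 2)) ≤ 1 := by
    rw [← nsmul_eq_mul]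
    exact (card_nsmul_le_sum t _ _ term_ge).trans
      (tuza_inequality disj cross q_nonneg (sub_nonneg.mpr q_le_one) (add_sub_cancel _ _))
  have : (#t : ℝ) ≤ 2 ^ (d + 1) * (k + 1) ^ d := by
    have weight_eq : q ^ d * (1 / 2) = 1 / (2 ^ (d + 1) * ((k : ℝ) + 1) ^ d) := by
      rw [q_def, div_pow, one_pow, mul_pow, pow_succ]; field_simp
    rwa [weight_eq, mul_one_div, div_le_one (by positivity)] at this
  exact_mod_cast this

end Tuza

section Minimizers

variable {ι E : Type*} [AddCommGroup E] [Module ℝ E] {f : E → ℝ} {p q : E}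

-- Helly's theorem for the sets `D i` together with the strict sublevel set `{x | f x < f p}`.
lemma exists_card_le_finrank_isMinOn_biInter [FiniteDimensional ℝ E] (hf : QuasiconvexOn ℝ univ f)
    {D : ι → Set E} {S : Finset ι} (hD : ∀ i ∈ S, Convex ℝ (D i)) (hpS : ∀ i ∈ S, p ∈ D i)
    (hmin : IsMinOn f (⋂ i ∈ S, D i) p) :
    ∃ B ⊆ S, #B ≤ finrank ℝ E ∧ IsMinOn f (⋂ i ∈ B, D i) p := by
  by_contra! no_witness
  let F : Option ι → Set E := fun o ↦ o.elim {x ∈ univ | f x < f p} D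
  have convex_F : ∀ o ∈ insertNone S, Convex ℝ (F o) :=
    forall_mem_insertNone.mpr ⟨hf.convex_lt (f p), hD⟩
  have inter_nonempty : ∀ J ⊆ insertNone S, #J ≤ finrank ℝ E + 1 → (⋂ o ∈ J, F o).Nonempty := by
    intro J hJS hJ
    have eraseNone_subset : eraseNone J ⊆ S := fun i hi ↦
      some_mem_insertNone.mp (hJS (mem_eraseNone.mp hi))
    by_cases none_mem : none ∈ J
    · have card_eraseNone : #(eraseNone J) ≤ finrank ℝ E := by
        rw [card_eraseNone_of_mem none_mem]
        omega
      have not_min := no_witness _ eraseNone_subset card_eraseNone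
      simp only [isMinOn_iff, not_forall, not_le, mem_iInter₂] at not_min
      obtain ⟨z, hzD, hzp⟩ := not_min
      refine ⟨z, mem_iInter₂.mpr ?_⟩
      rintro (_ | i) hi
      exacts [⟨mem_univ z, hzp⟩, hzD i (mem_eraseNone.mpr hi)]
    · refine ⟨p, mem_iInter₂.mpr ?_⟩
      rintro (_ | i) hi
      exacts [absurd hi none_mem, hpS i (eraseNone_subset (mem_eraseNone.mpr hi))]
  obtain ⟨z, hz⟩ := Convex.helly_theorem' (𝕜 := ℝ) convex_F inter_nonempty
  have hzF : ∀ o ∈ insertNone S, z ∈ F o := mem_iInter₂.mp hz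
  obtain ⟨⟨-, hzp⟩, hzS⟩ := forall_mem_insertNone.mp hzF
  exact (hmin (mem_iInter₂.mpr hzS)).not_gt hzp

lemma eq_of_isMinOn_of_mem_inter (hf : StrictConvexOn ℝ univ f) {s t : Set E}
    (hs : Convex ℝ s) (ht : Convex ℝ t) (hp : p ∈ s ∩ t) (hq : q ∈ s ∩ t)
    (hps : IsMinOn f s p) (hqt : IsMinOn f t q) : p = q :=
  (hf.subset (subset_univ _) (hs.inter ht)).eq_of_isMinOn (hps.on_subset inter_subset_left)
    (hqt.on_subset inter_subset_right) hp hq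

end Minimizers

section Levels

variable {ι E : Type*}

/-- The `(≤ k)`-level of a family of sets in an arbitrary space; `levelSetLE` is the planar case.
As there, `Set.ncard` makes this meaningful for finite families only. -/
def atMostLevel (D : ι → Set E) (k : ℕ) : Set E := {x | {i | x ∉ D i}.ncard ≤ k}

/-- The intersection of all members of the family that contain `x`: for convex members, a convex
piece around `x` of every `(≤ k)`-level containing `x`. -/
def memberInter (D : ι → Set E) (x : E) : Set E := ⋂ i ∈ {i | x ∈ D i}, D i

variable {D : ι → Set E} {k : ℕ} {x y : E} {f : E → ℝ}

lemma mem_memberInter : y ∈ memberInter D x ↔ ∀ i, x ∈ D i → y ∈ D i := mem_iInter₂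

lemma mem_memberInter_self : x ∈ memberInter D x := mem_memberInter.mpr fun _ ↦ id

lemma memberInter_subset_memberInter (hy : y ∈ memberInter D x) :
    memberInter D y ⊆ memberInter D x :=
  fun _ hz ↦ mem_memberInter.mpr fun i hi ↦
    mem_memberInter.mp hz i (mem_memberInter.mp hy i hi)

lemma memberInter_subset_atMostLevel [Finite ι] (hx : x ∈ atMostLevel D k) :
    memberInter D x ⊆ atMostLevel D k := by
  intro y hy
  have missed_subset : {i | y ∉ D i} ⊆ {i | x ∉ D i} := fun i ↦ mt (mem_memberInter.mp hy i)
  exact (ncard_le_ncard missed_subset).trans hx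

lemma convex_memberInter [AddCommGroup E] [Module ℝ E] (hD : ∀ i, Convex ℝ (D i)) (x : E) :
    Convex ℝ (memberInter D x) := convex_iInter₂ fun i _ ↦ hD i

lemma exists_finset_card_le_finrank_isMinOn [Finite ι] [AddCommGroup E] [Module ℝ E]
    [FiniteDimensional ℝ E] (hD : ∀ i, Convex ℝ (D i)) (hf : QuasiconvexOn ℝ univ f)
    (hx : IsMinOn f (memberInter D x) x) :
    ∃ B : Finset ι, (∀ i ∈ B, x ∈ D i) ∧ #B ≤ finrank ℝ E ∧ IsMinOn f (⋂ i ∈ B, D i) x := by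
  set S : Finset ι := {i | x ∈ D i}.toFinite.toFinset with S_def
  have mem_S : ∀ i, i ∈ S ↔ x ∈ D i := fun i ↦ by simp only [S_def, Finite.mem_toFinset, mem_ofPred]
  obtain ⟨B, hBS, card_B, hmin⟩ := exists_card_le_finrank_isMinOn_biInter hf (S := S)
    (fun i _ ↦ hD i) (fun i ↦ (mem_S i).mp) (by simpa only [mem_S] using! hx)
  exact ⟨B, fun i hi ↦ (mem_S i).mp (hBS hi), card_B, hmin⟩

lemma finite_setOf_isMinOn_memberInter [Finite ι] [AddCommGroup E] [Module ℝ E]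
    (hD : ∀ i, Convex ℝ (D i)) (hf : StrictConvexOn ℝ univ f) :
    {p | IsMinOn f (memberInter D p) p}.Finite := by
  have members_injOn : InjOn (fun p ↦ {i | p ∈ D i}) {p | IsMinOn f (memberInter D p) p} := by
    intro p hp q hq (hpq : {i | p ∈ D i} = {i | q ∈ D i})
    have inter_eq : memberInter D p = memberInter D q := by rw [memberInter, hpq, memberInter]
    exact eq_of_isMinOn_of_mem_inter hf (convex_memberInter hD p) (convex_memberInter hD q)
      ⟨mem_memberInter_self, inter_eq ▸ mem_memberInter_self⟩
      ⟨inter_eq ▸ mem_memberInter_self, mem_memberInter_self⟩ hp hq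
  exact Finite.of_finite_image (toFinite _) members_injOn

theorem encard_isMinOn_memberInter_le [Finite ι] [AddCommGroup E] [Module ℝ E]
    [FiniteDimensional ℝ E] (hD : ∀ i, Convex ℝ (D i)) (hf : StrictConvexOn ℝ univ f) (k : ℕ) :
    {p ∈ atMostLevel D k | IsMinOn f (memberInter D p) p}.encard
      ≤ ((2 ^ (finrank ℝ E + 1) * (k + 1) ^ finrank ℝ E : ℕ) : ℕ∞) := by
  set P : Set E := {p ∈ atMostLevel D k | IsMinOn f (memberInter D p) p}
  have P_finite : P.Finite := (finite_setOf_isMinOn_memberInter hD hf).subset fun _ hp ↦ hp.2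
  choose! B mem_B card_B min_B using fun p (hp : p ∈ P) ↦
    exists_finset_card_le_finrank_isMinOn hD hf.convexOn.quasiconvexOn hp.2
  let X : E → Finset ι := fun p ↦ {i | p ∉ D i}.toFinite.toFinset
  have disjoint_X : ∀ {C : Finset ι} {p : E}, Disjoint C (X p) ↔ ∀ i ∈ C, p ∈ D i := by
    intro C p
    simp only [X, Finset.disjoint_left, Finite.mem_toFinset, mem_ofPred, not_not]
  rw [P_finite.encard_eq_coe_toFinset_card, Nat.cast_le]
  refine card_le_of_cross_intersecting (A := B) (B := X) ?_ ?_ ?_ ?_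
  · simpa only [Finite.mem_toFinset] using card_B
  · intro p hp
    rw [← ncard_eq_toFinset_card]
    exact (P_finite.mem_toFinset.mp hp).1
  · simpa only [Finite.mem_toFinset, disjoint_X] using mem_B
  · rw [Finite.coe_toFinset]
    rintro p hp q hq hpq ⟨hq_mem, hp_mem⟩
    rw [disjoint_X] at hq_mem hp_mem
    exact hpq <| eq_of_isMinOn_of_mem_inter hf
      (convex_iInter₂ fun i _ ↦ hD i) (convex_iInter₂ fun i _ ↦ hD i)
      ⟨mem_iInter₂.mpr (mem_B p hp), mem_iInter₂.mpr hp_mem⟩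
      ⟨mem_iInter₂.mpr hq_mem, mem_iInter₂.mpr (mem_B q hq)⟩ (min_B p hp) (min_B q hq)

end Levels

lemma exists_isMinOn_norm_sq {E : Type*} [SeminormedAddCommGroup E] [ProperSpace E] {s : Set E}
    (hs : IsClosed s) (hne : s.Nonempty) : ∃ p ∈ s, IsMinOn (fun x ↦ ‖x‖ ^ 2) s p := by
  obtain ⟨p, hp, hdist⟩ := hs.exists_infDist_eq_dist hne 0
  refine ⟨p, hp, fun z hz ↦ pow_le_pow_left₀ (norm_nonneg p) ?_ 2⟩
  simpa only [hdist, dist_zero_left] using Metric.infDist_le_dist_of_mem (x := 0) hz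

section InnerProductSpace

variable {ι E : Type*} [NormedAddCommGroup E] [InnerProductSpace ℝ E]

lemma strictConvexOn_norm_sq : StrictConvexOn ℝ univ fun x : E ↦ ‖x‖ ^ 2 := by
  refine StrongConvexOn.strictConvexOn (m := 2) (strongConvexOn_iff_convex.mpr ?_) two_pos
  simpa using! convexOn_const (0 : ℝ) convex_univ

variable [FiniteDimensional ℝ E] [Finite ι] {D : ι → Set E} {k : ℕ} {x : E}

lemma exists_mem_connectedComponentIn_isMinOn_norm_sq (hconv : ∀ i, Convex ℝ (D i))
    (hclosed : ∀ i, IsClosed (D i)) (hx : x ∈ atMostLevel D k) :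
    ∃ p ∈ connectedComponentIn (atMostLevel D k) x,
      IsMinOn (fun z ↦ ‖z‖ ^ 2) (memberInter D p) p := by
  have inter_subset : memberInter D x ⊆ connectedComponentIn (atMostLevel D k) x :=
    (convex_memberInter hconv x).isPreconnected.subset_connectedComponentIn mem_memberInter_self
      (memberInter_subset_atMostLevel hx)
  have := FiniteDimensional.proper ℝ E
  obtain ⟨p, hp, hmin⟩ := exists_isMinOn_norm_sq
    (isClosed_biInter fun i _ ↦ hclosed i : IsClosed (memberInter D x)) ⟨x, mem_memberInter_self⟩
  exact ⟨p, inter_subset hp, hmin.on_subset (memberInter_subset_memberInter hp)⟩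

theorem stmt5_general (hconv : ∀ i, Convex ℝ (D i)) (hclosed : ∀ i, IsClosed (D i)) (k : ℕ) :
    {C : Set E | ∃ x ∈ atMostLevel D k, C = connectedComponentIn (atMostLevel D k) x}.encard
      ≤ ((2 ^ (finrank ℝ E + 1) * (k + 1) ^ finrank ℝ E : ℕ) : ℕ∞) := by
  set P : Set E := {p ∈ atMostLevel D k | IsMinOn (fun z ↦ ‖z‖ ^ 2) (memberInter D p) p}
  have components_subset :
      {C | ∃ x ∈ atMostLevel D k, C = connectedComponentIn (atMostLevel D k) x}
        ⊆ connectedComponentIn (atMostLevel D k) '' P := by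
    rintro _ ⟨x, hx, rfl⟩
    obtain ⟨p, hp, hmin⟩ := exists_mem_connectedComponentIn_isMinOn_norm_sq hconv hclosed hx
    exact ⟨p, ⟨connectedComponentIn_subset _ _ hp, hmin⟩, (connectedComponentIn_eq hp).symm⟩
  calc _ ≤ (connectedComponentIn (atMostLevel D k) '' P).encard :=
        encard_le_encard components_subset
    _ ≤ P.encard := encard_image_le _ _
    _ ≤ _ := encard_isMinOn_memberInter_le hconv strictConvexOn_norm_sq k

end InnerProductSpace

theorem stmt5 :
    ∃ c : ℕ, 0 < c ∧
      ∀ (I : Type) [Fintype I] (D : I → Set E2),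
        (∀ i, ∃ ctr : E2, D i = Metric.closedBall ctr 1) →
        ∀ k : ℕ,
          {C : Set E2 | ∃ x ∈ levelSetLE D k,
              C = connectedComponentIn (levelSetLE D k) x}.encard
            ≤ ((c * (k + 1) ^ 2 : ℕ) : ℕ∞) := by
  refine ⟨2 ^ (2 + 1), by norm_num, fun I _ D hD k ↦ ?_⟩
  choose ctr D_eq using hD
  have level_eq : levelSetLE D k = atMostLevel D k := rfl
  simpa only [level_eq, finrank_euclideanSpace_fin] using
    stmt5_general (D := D) (fun i ↦ D_eq i ▸ convex_closedBall (ctr i) 1)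
      (fun i ↦ D_eq i ▸ Metric.isClosed_closedBall) k
end
end

section
/- Let P be a finite set of points in ℝ² and let k be a natural number. Define r*(P,k) = inf{r ≥ 0 : ∃ c₁, c₂ ∈ ℝ² with |P \ (B(c₁,r) ∪ B(c₂,r))| ≤ k}, the optimal radius of a (2,k)-center of P. Then r*(P,k) = min over all subsets A ⊆ P and all integers 0 ≤ t ≤ k of max{rᵗ(A), r^{k−t}(P \ A)}; in particular this infimum is attained. -/
noncomputable section

/-- rad(Y): the radius of the smallest closed disk containing Y. -/
def rad (Y : Set E2) : ℝ :=
  sInf {r : ℝ | 0 ≤ r ∧ ∃ c : E2, Y ⊆ Metric.closedBall c r}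

/-- rᵗ(X): the minimum radius of a closed disk containing all but at most t points of X. -/
def rT (t : ℕ) (X : Finset E2) : ℝ :=
  sInf {ρ : ℝ | ∃ Y : Finset E2, Y ⊆ X ∧ ((X : Set E2) \ (Y : Set E2)).ncard ≤ t ∧
    ρ = rad (Y : Set E2)}


/-- r*(P,k): the optimal radius of a (2,k)-center of P. -/
def rstar (P : Finset E2) (k : ℕ) : ℝ :=
  sInf {r : ℝ | 0 ≤ r ∧ ∃ c₁ c₂ : E2,
    ((P : Set E2) \ (Metric.closedBall c₁ r ∪ Metric.closedBall c₂ r)).ncard ≤ k}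

/-!
The two radii compared in the theorem have the same strict upper bounds. If two balls of radius `ρ`
miss at most `k` points of `P`, let `A` consist of the points of `P` in the first ball and `t` of
the missed points (all of them, if there are fewer); the first ball then misses at most `t` points
of `A`, and the second at most `k - t` points of `P \ A`. Conversely, enlarging the smaller of two
balls for `A` and `P \ A` gives a two-center of `P`, and the numbers of outliers add up. Arguing
with strict bounds avoids the existence of smallest enclosing balls, so any metric space will do.
-/

section FiniteSets

variable {α : Type*}

theorem ncard_sdiff_union_le_add {P A S T : Set α} (hP : P.Finite) (hA : A.Finite) :
    (P \ (S ∪ T)).ncard ≤ (A \ S).ncard + ((P \ A) \ T).ncard := by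
  have missed_subset : P \ (S ∪ T) ⊆ A \ S ∪ (P \ A) \ T := by
    rintro x ⟨hxP, hxST⟩
    simp only [Set.mem_union, Set.mem_sdiff] at hxST ⊢
    tauto
  exact (Set.ncard_le_ncard missed_subset (hA.sdiff.union hP.sdiff.sdiff)).trans
    (Set.ncard_union_le _ _)

theorem exists_subset_ncard_sdiff_le {P S T : Set α} {m n : ℕ} (hP : P.Finite)
    (h : (P \ (S ∪ T)).ncard ≤ m + n) :
    ∃ A ⊆ P, (A \ S).ncard ≤ m ∧ ((P \ A) \ T).ncard ≤ n := by
  obtain ⟨V, hV, hVcard⟩ :=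
    Set.exists_subset_card_eq (min_le_right m (P \ (S ∪ T)).ncard)
  have missed_finite : (P \ (S ∪ T)).Finite := hP.sdiff
  have hVfin : V.Finite := missed_finite.subset hV
  refine ⟨P ∩ S ∪ V, Set.union_subset Set.inter_subset_left (hV.trans Set.sdiff_subset), ?_, ?_⟩
  · have left_missed : (P ∩ S ∪ V) \ S ⊆ V := by grind
    exact (Set.ncard_le_ncard left_missed hVfin).trans (hVcard.trans_le (min_le_left _ _))
  · have right_missed : (P \ (P ∩ S ∪ V)) \ T ⊆ (P \ (S ∪ T)) \ V := by grind
    have right_card := Set.ncard_le_ncard right_missed missed_finite.sdiff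
    rw [Set.ncard_sdiff hV hVfin, hVcard] at right_card
    omega

end FiniteSets

theorem sInf_setOf_nonneg_and_lt_iff {p : ℝ → Prop} (hp : ∃ ρ, 0 ≤ ρ ∧ p ρ) {r : ℝ} :
    sInf {ρ | 0 ≤ ρ ∧ p ρ} < r ↔ ∃ ρ ∈ Set.Ico 0 r, p ρ := by
  have bounded_below : BddBelow {ρ | 0 ≤ ρ ∧ p ρ} := ⟨0, fun _ h => h.1⟩
  exact (csInf_lt_iff bounded_below hp).trans (exists_congr fun _ => and_right_comm)

section MetricSpace

variable {α : Type*} [PseudoMetricSpace α]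

/-- The radius of the smallest closed ball containing `Y`, as the infimum of the admissible radii
(which need not be attained in a general space). For `α = E2` this is `rad` by definition. -/
def enclosingRadius (Y : Set α) : ℝ :=
  sInf {r : ℝ | 0 ≤ r ∧ ∃ c : α, Y ⊆ Metric.closedBall c r}

/-- The least enclosing radius of a subset of `X` that omits at most `t` points. For `α = E2` this
is `rT` by definition. -/
def outlierRadius (t : ℕ) (X : Finset α) : ℝ :=
  sInf {ρ : ℝ | ∃ Y : Finset α, Y ⊆ X ∧ ((X : Set α) \ (Y : Set α)).ncard ≤ t ∧
    ρ = enclosingRadius (Y : Set α)}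

/-- The optimal radius of a `(2, k)`-center of `P`, two congruent closed balls missing at most `k`
points. For `α = E2` this is `rstar` by definition. -/
def twoCenterRadius (P : Finset α) (k : ℕ) : ℝ :=
  sInf {r : ℝ | 0 ≤ r ∧ ∃ c₁ c₂ : α,
    ((P : Set α) \ (Metric.closedBall c₁ r ∪ Metric.closedBall c₂ r)).ncard ≤ k}

theorem enclosingRadius_nonneg (Y : Set α) : 0 ≤ enclosingRadius Y :=
  Real.sInf_nonneg fun _ h => h.1

theorem enclosingRadius_lt_iff [Nonempty α] {Y : Set α} (hY : Bornology.IsBounded Y) {r : ℝ} :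
    enclosingRadius Y < r ↔ ∃ ρ ∈ Set.Ico 0 r, ∃ c : α, Y ⊆ Metric.closedBall c ρ := by
  obtain ⟨c⟩ := ‹Nonempty α›
  obtain ⟨R, hR, hYR⟩ := hY.subset_closedBall_lt 0 c
  exact sInf_setOf_nonneg_and_lt_iff ⟨R, hR.le, c, hYR⟩

theorem outlierRadius_lt_iff_exists_subset {t : ℕ} {X : Finset α} {r : ℝ} :
    outlierRadius t X < r ↔
      ∃ Y ⊆ X, ((X : Set α) \ Y).ncard ≤ t ∧ enclosingRadius (Y : Set α) < r := by
  rw [outlierRadius, csInf_lt_iff]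
  · constructor
    · rintro ⟨_, ⟨Y, hYX, hcard, rfl⟩, hr⟩
      exact ⟨Y, hYX, hcard, hr⟩
    · rintro ⟨Y, hYX, hcard, hr⟩
      exact ⟨_, ⟨Y, hYX, hcard, rfl⟩, hr⟩
  · refine ⟨0, ?_⟩
    rintro _ ⟨Y, -, -, rfl⟩
    exact enclosingRadius_nonneg _
  · exact ⟨_, X, subset_rfl, by simp, rfl⟩

theorem outlierRadius_lt_iff [Nonempty α] {t : ℕ} {X : Finset α} {r : ℝ} :
    outlierRadius t X < r ↔
      ∃ ρ ∈ Set.Ico 0 r, ∃ c : α, ((X : Set α) \ Metric.closedBall c ρ).ncard ≤ t := by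
  classical
  rw [outlierRadius_lt_iff_exists_subset]
  constructor
  · rintro ⟨Y, -, hcard, hr⟩
    obtain ⟨ρ, hρ, c, hYc⟩ := (enclosingRadius_lt_iff Y.finite_toSet.isBounded).1 hr
    exact ⟨ρ, hρ, c, (Set.ncard_le_ncard (Set.sdiff_subset_sdiff_right hYc)
      X.finite_toSet.sdiff).trans hcard⟩
  · rintro ⟨ρ, hρ, c, hcard⟩
    refine ⟨{x ∈ X | x ∈ Metric.closedBall c ρ}, Finset.filter_subset _ _, ?_,
      (enclosingRadius_lt_iff (Finset.finite_toSet _).isBounded).2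
        ⟨ρ, hρ, c, fun x hx => (Finset.mem_filter.1 hx).2⟩⟩
    simpa only [Finset.coe_filter, ← Finset.mem_coe, Set.sep_mem_eq, Set.sdiff_self_inter]
      using hcard

theorem twoCenterRadius_lt_iff [Nonempty α] {P : Finset α} {k : ℕ} {r : ℝ} :
    twoCenterRadius P k < r ↔ ∃ ρ ∈ Set.Ico 0 r, ∃ c₁ c₂ : α,
      ((P : Set α) \ (Metric.closedBall c₁ ρ ∪ Metric.closedBall c₂ ρ)).ncard ≤ k := by
  obtain ⟨c⟩ := ‹Nonempty α›
  obtain ⟨R, hR, hPR⟩ := P.finite_toSet.isBounded.subset_closedBall_lt 0 c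
  have feasible : ((P : Set α) \ (Metric.closedBall c R ∪ Metric.closedBall c R)).ncard ≤ k := by
    simp [Set.sdiff_eq_empty.2 hPR]
  exact sInf_setOf_nonneg_and_lt_iff ⟨R, hR.le, c, c, feasible⟩

theorem twoCenterRadius_lt_iff_exists_subset [Nonempty α] [DecidableEq α] {P : Finset α}
    {k t : ℕ} (ht : t ≤ k) {r : ℝ} :
    twoCenterRadius P k < r ↔
      ∃ A ⊆ P, outlierRadius t A < r ∧ outlierRadius (k - t) (P \ A) < r := by
  simp only [twoCenterRadius_lt_iff, outlierRadius_lt_iff, Finset.coe_sdiff]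
  constructor
  · rintro ⟨ρ, hρ, c₁, c₂, hcard⟩
    rw [← Nat.add_sub_cancel' ht] at hcard
    obtain ⟨A, hA, hcard₁, hcard₂⟩ := exists_subset_ncard_sdiff_le P.finite_toSet hcard
    lift A to Finset α using P.finite_toSet.subset hA
    exact ⟨A, Finset.coe_subset.1 hA, ⟨ρ, hρ, c₁, hcard₁⟩, ⟨ρ, hρ, c₂, hcard₂⟩⟩
  · rintro ⟨A, -, ⟨ρ₁, hρ₁, c₁, hcard₁⟩, ⟨ρ₂, hρ₂, c₂, hcard₂⟩⟩
    refine ⟨max ρ₁ ρ₂, ⟨le_max_of_le_left hρ₁.1, max_lt hρ₁.2 hρ₂.2⟩, c₁, c₂, ?_⟩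
    calc
      ((P : Set α) \ (Metric.closedBall c₁ (max ρ₁ ρ₂) ∪
          Metric.closedBall c₂ (max ρ₁ ρ₂))).ncard
        ≤ ((P : Set α) \ (Metric.closedBall c₁ ρ₁ ∪ Metric.closedBall c₂ ρ₂)).ncard := by
          refine Set.ncard_le_ncard ?_ P.finite_toSet.sdiff
          gcongr
          exacts [le_max_left _ _, le_max_right _ _]
      _ ≤ ((A : Set α) \ Metric.closedBall c₁ ρ₁).ncard +
            (((P : Set α) \ A) \ Metric.closedBall c₂ ρ₂).ncard :=
          ncard_sdiff_union_le_add P.finite_toSet A.finite_toSet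
      _ ≤ t + (k - t) := add_le_add hcard₁ hcard₂
      _ = k := Nat.add_sub_cancel' ht

theorem stmt11_general [Nonempty α] [DecidableEq α] (P : Finset α) {k t : ℕ} (ht : t ≤ k) :
    twoCenterRadius P k = P.powerset.inf' P.powerset_nonempty fun A =>
      max (outlierRadius t A) (outlierRadius (k - t) (P \ A)) :=
  eq_of_forall_gt_iff fun r => by
    simp only [twoCenterRadius_lt_iff_exists_subset ht, Finset.inf'_lt_iff, Finset.mem_powerset,
      max_lt_iff]

end MetricSpace

open scoped Classical in
theorem stmt11 (P : Finset E2) (k : ℕ) :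
    (∃ A : Finset E2, A ⊆ P ∧ ∃ t : ℕ, t ≤ k ∧
        rstar P k = max (rT t A) (rT (k - t) (P \ A))) ∧
    (∀ A : Finset E2, A ⊆ P → ∀ t : ℕ, t ≤ k →
        rstar P k ≤ max (rT t A) (rT (k - t) (P \ A))) := by
  obtain ⟨A, hA, hmin⟩ := Finset.exists_mem_eq_inf' P.powerset_nonempty fun A =>
    max (rT 0 A) (rT (k - 0) (P \ A))
  exact ⟨⟨A, Finset.mem_powerset.1 hA, 0, k.zero_le, (stmt11_general P k.zero_le).trans hmin⟩,
    fun A hA t ht => (stmt11_general P ht).trans_le (Finset.inf'_le _ (Finset.mem_powerset.2 hA))⟩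
end
end

section
/- Let r > 0 and let c₁, c₂ ∈ ℝ² with ‖c₁ − c₂‖ ≤ r (nearly concentric disks). Then the two-dimensional Lebesgue measure of the intersection of the closed disks of radius r centered at c₁ and c₂ satisfies vol(B(c₁,r) ∩ B(c₂,r)) ≥ (2π/3 − √3/2)·r². -/
noncomputable section

open MeasureTheory

/-!
In orthonormal coordinates whose second axis joins the centers, with the midpoint of the centers as
origin, the parallel to that axis at signed distance `y` meets both disks in a common segment whose
length is the positive part of `2 * (√(r ^ 2 - y ^ 2) - a)`, where `a` is half the distance between
the centers. By Cavalieri's principle the area of the intersection is the integral of these lengths,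
which is twice the area of the circular segment cut off by a chord at distance `a` from the center.
That area decreases in `a`, so for centers at distance at most `r` the extremal case is `a = r / 2`.
-/

/-- The area of the part of a disk of radius `r` lying beyond a chord at distance `a` from its
center, and half the area common to two such disks with centers `2 * a` apart. Negative `a` stands
for the larger part of the disk; the formula is meaningful for `0 < r` and `|a| ≤ r`. -/
def circularSegmentArea (r a : ℝ) : ℝ :=
  r ^ 2 * Real.arccos (a / r) - a * √(r ^ 2 - a ^ 2)

section CircularSegment

variable {r a b : ℝ}

theorem sqrt_one_sub_div_sq (hr : 0 < r) (x : ℝ) :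
    √(1 - (x / r) ^ 2) = √(r ^ 2 - x ^ 2) / r := by
  rw [show 1 - (x / r) ^ 2 = (r ^ 2 - x ^ 2) / r ^ 2 by field_simp,
    Real.sqrt_div' _ (sq_nonneg r), Real.sqrt_sq hr.le]

theorem hasDerivAt_arcsin_div {x : ℝ} (hx : |x| < r) :
    HasDerivAt (fun x ↦ Real.arcsin (x / r)) (1 / √(r ^ 2 - x ^ 2)) x := by
  have hr : 0 < r := (abs_nonneg x).trans_lt hx
  obtain ⟨hneg, hpos⟩ := abs_lt.1 hx
  have hne_neg_one : x / r ≠ -1 := by rw [Ne, div_eq_iff hr.ne']; linarith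
  have hne_one : x / r ≠ 1 := by rw [Ne, div_eq_iff hr.ne']; linarith
  have hd := (Real.hasDerivAt_arcsin hne_neg_one hne_one).comp x ((hasDerivAt_id x).div_const r)
  refine hd.congr_deriv ?_
  rw [sqrt_one_sub_div_sq hr]
  field_simp

theorem hasDerivAt_mul_sqrt_add_arcsin {x : ℝ} (hx : |x| < r) :
    HasDerivAt (fun x ↦ (x * √(r ^ 2 - x ^ 2) + r ^ 2 * Real.arcsin (x / r)) / 2)
      √(r ^ 2 - x ^ 2) x := by
  have hpos : 0 < r ^ 2 - x ^ 2 := sub_pos.2 (sq_lt_sq' (abs_lt.1 hx).1 (abs_lt.1 hx).2)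
  have hsqrt : HasDerivAt (fun x ↦ √(r ^ 2 - x ^ 2)) (-(2 * x) / (2 * √(r ^ 2 - x ^ 2))) x := by
    simpa using ((hasDerivAt_pow 2 x).const_sub (r ^ 2)).sqrt hpos.ne'
  have hd := (((hasDerivAt_id x).mul hsqrt).add
    ((hasDerivAt_arcsin_div hx).const_mul (r ^ 2))).div_const 2
  refine hd.congr_deriv ?_
  have hne : √(r ^ 2 - x ^ 2) ≠ 0 := (Real.sqrt_pos.2 hpos).ne'
  simp only [id]
  field_simp
  rw [Real.sq_sqrt hpos.le]
  ring

theorem integral_sqrt_sq_sub_sq (ha : -r ≤ a) (hab : a ≤ b) (hb : b ≤ r) :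
    ∫ x in a..b, √(r ^ 2 - x ^ 2) =
      (b * √(r ^ 2 - b ^ 2) + r ^ 2 * Real.arcsin (b / r)) / 2 -
        (a * √(r ^ 2 - a ^ 2) + r ^ 2 * Real.arcsin (a / r)) / 2 := by
  refine intervalIntegral.integral_eq_sub_of_hasDerivAt_of_le hab
    (f := fun x ↦ (x * √(r ^ 2 - x ^ 2) + r ^ 2 * Real.arcsin (x / r)) / 2)
    (Continuous.continuousOn (by fun_prop)) (fun x hx ↦ hasDerivAt_mul_sqrt_add_arcsin ?_)
    (Continuous.intervalIntegrable (by fun_prop) _ _)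
  exact abs_lt.2 ⟨ha.trans_lt hx.1, hx.2.trans_le hb⟩

theorem circularSegmentArea_sub_eq_integral (ha : -r ≤ a) (hab : a ≤ b) (hb : b ≤ r) :
    circularSegmentArea r a - circularSegmentArea r b = 2 * ∫ x in a..b, √(r ^ 2 - x ^ 2) := by
  rw [integral_sqrt_sq_sub_sq ha hab hb]
  simp only [circularSegmentArea, Real.arccos_eq_pi_div_two_sub_arcsin]
  ring

theorem antitoneOn_circularSegmentArea (r : ℝ) :
    AntitoneOn (circularSegmentArea r) (Set.Icc (-r) r) := by
  intro a ha b hb hab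
  have hnonneg : 0 ≤ ∫ x in a..b, √(r ^ 2 - x ^ 2) :=
    intervalIntegral.integral_nonneg hab fun x _ ↦ Real.sqrt_nonneg _
  linarith [circularSegmentArea_sub_eq_integral ha.1 hab hb.2]

theorem circularSegmentArea_div_two (hr : 0 < r) :
    circularSegmentArea r (r / 2) = (Real.pi / 3 - √3 / 4) * r ^ 2 := by
  have harccos : Real.arccos (r / 2 / r) = Real.pi / 3 := by
    rw [div_right_comm, div_self hr.ne', ← Real.cos_pi_div_three]
    exact Real.arccos_cos (by positivity) (by linarith [Real.pi_pos])
  have hsqrt : √(r ^ 2 - (r / 2) ^ 2) = √3 * (r / 2) := by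
    rw [show r ^ 2 - (r / 2) ^ 2 = 3 * (r / 2) ^ 2 by ring, Real.sqrt_mul zero_le_three,
      Real.sqrt_sq (by positivity)]
  rw [circularSegmentArea, harccos, hsqrt]
  ring

theorem integral_sqrt_sub_eq_circularSegmentArea (hr : 0 < r) (ha : 0 ≤ a) (har : a ≤ r) :
    ∫ x in (-√(r ^ 2 - a ^ 2))..√(r ^ 2 - a ^ 2), (√(r ^ 2 - x ^ 2) - a) =
      circularSegmentArea r a := by
  set s := √(r ^ 2 - a ^ 2)
  have hs_nonneg : 0 ≤ s := Real.sqrt_nonneg _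
  have hs_le : s ≤ r := Real.sqrt_le_iff.2 ⟨hr.le, by linarith [sq_nonneg a]⟩
  have hs_sq : s ^ 2 = r ^ 2 - a ^ 2 := Real.sq_sqrt (by nlinarith)
  have hchord : √(r ^ 2 - s ^ 2) = a := by rw [hs_sq, sub_sub_cancel, Real.sqrt_sq ha]
  have harcsin : Real.arcsin (s / r) = Real.arccos (a / r) := by
    rw [Real.arccos_eq_arcsin (by positivity), sqrt_one_sub_div_sq hr]
  rw [intervalIntegral.integral_sub (Continuous.intervalIntegrable (by fun_prop) _ _)
      intervalIntegrable_const, intervalIntegral.integral_const,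
    integral_sqrt_sq_sub_sq (neg_le_neg hs_le) (neg_le_self hs_nonneg) hs_le,
    neg_sq, hchord, neg_div, Real.arcsin_neg, harcsin, circularSegmentArea, smul_eq_mul]
  ring

theorem lintegral_ofReal_sqrt_sub_eq_circularSegmentArea (hr : 0 < r) (ha : 0 ≤ a) (har : a ≤ r) :
    ∫⁻ x, ENNReal.ofReal (2 * (√(r ^ 2 - x ^ 2) - a)) =
      ENNReal.ofReal (2 * circularSegmentArea r a) := by
  set s := √(r ^ 2 - a ^ 2)
  have hsupport : (fun x ↦ ENNReal.ofReal (2 * (√(r ^ 2 - x ^ 2) - a))).support ⊆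
      Set.Ioc (-s) s := by
    intro x hx
    have hlt : a < √(r ^ 2 - x ^ 2) := by
      simpa  using hx
    have hx_lt : -s < x ∧ x < s := Real.sq_lt.1 (by linarith [(Real.lt_sqrt ha).1 hlt])
    exact ⟨hx_lt.1, hx_lt.2.le⟩
  have hnonneg : ∀ x ∈ Set.Ioc (-s) s, 0 ≤ 2 * (√(r ^ 2 - x ^ 2) - a) := by
    intro x hx
    have hx_sq : x ^ 2 ≤ r ^ 2 - a ^ 2 :=
      (Real.sq_le (by nlinarith)).2 ⟨hx.1.le, hx.2⟩
    have ha_le : a ≤ √(r ^ 2 - x ^ 2) := Real.le_sqrt_of_sq_le (by linarith)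
    linarith
  have hcont : Continuous fun x ↦ 2 * (√(r ^ 2 - x ^ 2) - a) := by fun_prop
  rw [← setLIntegral_eq_of_support_subset hsupport,
    ← ofReal_integral_eq_lintegral_ofReal hcont.integrableOn_Ioc
      (ae_restrict_of_forall_mem measurableSet_Ioc hnonneg),
    ← intervalIntegral.integral_of_le (neg_le_self (Real.sqrt_nonneg _)),
    intervalIntegral.integral_const_mul, integral_sqrt_sub_eq_circularSegmentArea hr ha har]

end CircularSegment

theorem exists_orthonormalBasis_eq_norm_smul {𝕜 E ι : Type*} [RCLike 𝕜] [NormedAddCommGroup E]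
    [InnerProductSpace 𝕜 E] [FiniteDimensional 𝕜 E] [Fintype ι]
    (hι : Module.finrank 𝕜 E = Fintype.card ι) (i : ι) (v : E) :
    ∃ b : OrthonormalBasis ι 𝕜 E, v = (‖v‖ : 𝕜) • b i := by
  rcases eq_or_ne v 0 with rfl | hv
  · exact ⟨(stdOrthonormalBasis 𝕜 E).reindex (Fintype.equivOfCardEq (by simpa using hι)), by simp⟩
  · have hunit : Orthonormal 𝕜 (({i} : Set ι).domRestrict fun _ ↦ (‖v‖ : 𝕜)⁻¹ • v) :=
      ⟨fun _ ↦ norm_smul_inv_norm hv, fun j k hjk ↦ absurd (Subsingleton.elim j k) hjk⟩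
    obtain ⟨b, hb⟩ := hunit.exists_orthonormalBasis_extension_of_card_eq hι
    refine ⟨b, ?_⟩
    rw [hb i rfl, smul_inv_smul₀ (by simpa using hv)]

theorem volume_setOf_sub_sq_le_and_add_sq_le {a : ℝ} (ha : 0 ≤ a) (t : ℝ) :
    volume {x : ℝ | (x - a) ^ 2 ≤ t ∧ (x + a) ^ 2 ≤ t} = ENNReal.ofReal (2 * (√t - a)) := by
  rcases lt_or_ge t 0 with ht | ht
  · have hempty : {x : ℝ | (x - a) ^ 2 ≤ t ∧ (x + a) ^ 2 ≤ t} = ∅ :=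
      Set.eq_empty_of_forall_notMem fun x hx ↦ absurd hx.1 (ht.trans_le (sq_nonneg _)).not_ge
    rw [hempty, measure_empty, Real.sqrt_eq_zero_of_nonpos ht.le,
      ENNReal.ofReal_of_nonpos (by linarith)]
  · have hIcc : {x : ℝ | (x - a) ^ 2 ≤ t ∧ (x + a) ^ 2 ≤ t} = Set.Icc (a - √t) (√t - a) := by
      ext x
      simp only [Set.mem_ofPred_eq, Set.mem_Icc, Real.sq_le ht]
      constructor
      · rintro ⟨⟨hl, -⟩, -, hu⟩
        exact ⟨by linarith, by linarith⟩
      · rintro ⟨hl, hu⟩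
        exact ⟨⟨by linarith, by linarith⟩, by linarith, by linarith⟩
    rw [hIcc, Real.volume_Icc]
    congr 1
    ring

section Plane

variable {V : Type*} [NormedAddCommGroup V] [InnerProductSpace ℝ V]

theorem norm_smul_add_smul_sq (b : OrthonormalBasis (Fin 2) ℝ V) (y x : ℝ) :
    ‖y • b 0 + x • b 1‖ ^ 2 = y ^ 2 + x ^ 2 := by
  have horth : inner ℝ (y • b 0) (x • b 1) = 0 := by
    simp [inner_smul_left, inner_smul_right, b.inner_eq_zero]
  rw [sq, norm_add_sq_eq_norm_sq_add_norm_sq_of_inner_eq_zero _ _ horth]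
  simp [norm_smul, ← sq]

variable [FiniteDimensional ℝ V] [MeasurableSpace V] [BorelSpace V] {r : ℝ}

theorem measurePreserving_add_smul_add_smul (b : OrthonormalBasis (Fin 2) ℝ V) (m : V) :
    MeasurePreserving fun p : ℝ × ℝ ↦ m + (p.1 • b 0 + p.2 • b 1) := by
  have hcoord (p : ℝ × ℝ) : p.1 • b 0 + p.2 • b 1 =
      b.repr.symm (WithLp.toLp 2 (MeasurableEquiv.finTwoArrow.symm p)) := by
    rw [← b.sum_repr_symm, Fin.sum_univ_two]
    rfl
  simp only [hcoord]
  exact (measurePreserving_add_left volume m).comp (b.measurePreserving_repr_symm.comp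
    ((PiLp.volume_preserving_toLp (Fin 2)).comp (volume_preserving_finTwoArrow ℝ).symm))

theorem volume_closedBall_add_inter_closedBall_sub (b : OrthonormalBasis (Fin 2) ℝ V) (m : V)
    {a : ℝ} (ha : 0 ≤ a) (hr : 0 ≤ r) :
    volume (Metric.closedBall (m + a • b 1) r ∩ Metric.closedBall (m - a • b 1) r) =
      ∫⁻ y, ENNReal.ofReal (2 * (√(r ^ 2 - y ^ 2) - a)) := by
  have hmp := measurePreserving_add_smul_add_smul b m
  have hmeas : MeasurableSet
      (Metric.closedBall (m + a • b 1) r ∩ Metric.closedBall (m - a • b 1) r) :=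
    measurableSet_closedBall.inter measurableSet_closedBall
  rw [← hmp.measure_preimage hmeas.nullMeasurableSet, Measure.volume_eq_prod,
    Measure.prod_apply (hmp.measurable hmeas)]
  refine lintegral_congr fun y ↦ ?_
  rw [← volume_setOf_sub_sq_le_and_add_sq_le ha]
  congr 1
  ext x
  have hplus : m + (y • b 0 + x • b 1) - (m + a • b 1) = y • b 0 + (x - a) • b 1 := by module
  have hminus : m + (y • b 0 + x • b 1) - (m - a • b 1) = y • b 0 + (x + a) • b 1 := by module
  simp only [Set.mem_preimage, Set.mem_inter_iff, mem_closedBall_iff_norm, Set.mem_ofPred_eq,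
    hplus, hminus, ← sq_le_sq₀ (norm_nonneg _) hr, norm_smul_add_smul_sq, le_sub_iff_add_le']

theorem volume_closedBall_inter_closedBall (hV : Module.finrank ℝ V = 2) (hr : 0 < r) {c₁ c₂ : V}
    (h : ‖c₁ - c₂‖ ≤ 2 * r) :
    volume (Metric.closedBall c₁ r ∩ Metric.closedBall c₂ r) =
      ENNReal.ofReal (2 * circularSegmentArea r (‖c₁ - c₂‖ / 2)) := by
  obtain ⟨b, hb⟩ := exists_orthonormalBasis_eq_norm_smul (𝕜 := ℝ) (by simpa using hV) (1 : Fin 2)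
    (c₁ - c₂)
  set a := ‖c₁ - c₂‖ / 2 with ha
  have ha_nonneg : 0 ≤ a := by positivity
  have hab : a • b 1 = (2⁻¹ : ℝ) • (c₁ - c₂) := by
    rw [hb, smul_smul, ha, div_eq_inv_mul, RCLike.ofReal_real_eq_id, id]
  have hc₁ : midpoint ℝ c₁ c₂ + a • b 1 = c₁ := by
    rw [hab, midpoint_eq_smul_add, invOf_eq_inv]; module
  have hc₂ : midpoint ℝ c₁ c₂ - a • b 1 = c₂ := by
    rw [hab, midpoint_eq_smul_add, invOf_eq_inv]; module
  rw [← lintegral_ofReal_sqrt_sub_eq_circularSegmentArea hr ha_nonneg (by linarith),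
    ← volume_closedBall_add_inter_closedBall_sub b (midpoint ℝ c₁ c₂) ha_nonneg hr.le, hc₁, hc₂]

theorem stmt12_general (hV : Module.finrank ℝ V = 2) (hr : 0 < r) {c₁ c₂ : V}
    (h : ‖c₁ - c₂‖ ≤ r) :
    ENNReal.ofReal ((2 * Real.pi / 3 - √3 / 2) * r ^ 2) ≤
      volume (Metric.closedBall c₁ r ∩ Metric.closedBall c₂ r) := by
  have hdist : ‖c₁ - c₂‖ / 2 ≤ r / 2 := by gcongr
  have hnonneg : 0 ≤ ‖c₁ - c₂‖ := norm_nonneg _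
  have hsegment : circularSegmentArea r (r / 2) ≤ circularSegmentArea r (‖c₁ - c₂‖ / 2) :=
    antitoneOn_circularSegmentArea r ⟨by linarith, by linarith⟩ ⟨by linarith, by linarith⟩ hdist
  rw [volume_closedBall_inter_closedBall hV hr (by linarith)]
  apply ENNReal.ofReal_le_ofReal
  linarith [circularSegmentArea_div_two hr]

end Plane

theorem stmt12 (r : ℝ) (hr : 0 < r) (c₁ c₂ : E2) (h : ‖c₁ - c₂‖ ≤ r) :
    volume (Metric.closedBall c₁ r ∩ Metric.closedBall c₂ r)
      ≥ ENNReal.ofReal ((2 * Real.pi / 3 - Real.sqrt 3 / 2) * r ^ 2) :=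
  stmt12_general finrank_euclideanSpace_fin hr h
end
end

section
/- Let 𝒮 be a nonempty finite family of axis-aligned closed unit squares [a_i, a_i+1] × [b_i, b_i+1] in ℝ². Set ℓᴸ = min_i (a_i + 1) (the right boundary of the leftmost square), ℓᴮ = min_i (b_i + 1) (the top boundary of the bottommost square), and ℓᵀ = max_i b_i (the bottom boundary of the topmost square), and assume ℓᴮ ≤ ℓᵀ. Then for every point q = (x,y) with x ≤ ℓᴸ, the point q' = (ℓᴸ, y') with y' = max(ℓᴮ, min(y, ℓᵀ)) (the point of the segment {ℓᴸ} × [ℓᴮ, ℓᵀ] closest to q) stabs every square of 𝒮 that q stabs; i.e. for every S ∈ 𝒮, if q ∈ S then q' ∈ S. -/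
noncomputable section

/-- The axis-aligned closed unit square [a, a+1] × [b, b+1] in ℝ². -/
def unitSq (a b : ℝ) : Set (ℝ × ℝ) := Set.Icc a (a + 1) ×ˢ Set.Icc b (b + 1)

theorem sup_inf_mem_Icc {α : Type*} [Lattice α] {c d l u y : α}
    (hy : y ∈ Set.Icc c d) (hl : l ≤ d) (hu : c ≤ u) : l ⊔ y ⊓ u ∈ Set.Icc c d :=
  ⟨le_sup_of_le_right (le_inf hy.1 hu), sup_le hl (inf_le_of_left_le hy.2)⟩

theorem stmt16_general {I : Type*} (a b : I → ℝ) {lL lB lT : ℝ}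
    (hlL : ∀ i, lL ≤ a i + 1) (hlB : ∀ i, lB ≤ b i + 1) (hlT : ∀ i, b i ≤ lT)
    {q : ℝ × ℝ} (hq : q.1 ≤ lL) (i : I) (hqi : q ∈ unitSq (a i) (b i)) :
    (lL, max lB (min q.2 lT)) ∈ unitSq (a i) (b i) := by
  obtain ⟨hx, hy⟩ := hqi
  have hx' : lL ∈ Set.Icc (a i) (a i + 1) := ⟨hx.1.trans hq, hlL i⟩
  have hy' : max lB (min q.2 lT) ∈ Set.Icc (b i) (b i + 1) := sup_inf_mem_Icc hy (hlB i) (hlT i)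
  exact ⟨hx', hy'⟩

theorem stmt16 {I : Type*} [Fintype I] [Nonempty I] (a b : I → ℝ)
    (lL lB lT : ℝ)
    (hlL : lL = Finset.univ.inf' Finset.univ_nonempty (fun i => a i + 1))
    (hlB : lB = Finset.univ.inf' Finset.univ_nonempty (fun i => b i + 1))
    (hlT : lT = Finset.univ.sup' Finset.univ_nonempty b)
    (hBT : lB ≤ lT)
    (q : ℝ × ℝ) (hq : q.1 ≤ lL) :
    ∀ i : I, q ∈ unitSq (a i) (b i) → (lL, max lB (min q.2 lT)) ∈ unitSq (a i) (b i) :=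
  stmt16_general a b (fun i => hlL.trans_le (Finset.inf'_le _ (Finset.mem_univ i)))
    (fun i => hlB.trans_le (Finset.inf'_le _ (Finset.mem_univ i)))
    (fun i => (Finset.le_sup' b (Finset.mem_univ i)).trans_eq hlT.symm) hq
end
end

section
/- Let P be a finite set of points in ℝ², let p ≥ 1 and k ≥ 0 be integers. Define s* = inf{s ≥ 0 : there exist c₁, …, c_p ∈ ℝ² such that all but at most k points of P lie in the union of the p axis-aligned closed squares of side length s centered at c₁, …, c_p}. Then the infimum is attained, and either s* = 0 or there exist points u, v ∈ P such that s* = |u₁ − v₁| or s* = |u₂ − v₂|; that is, the minimal side length is the difference of x-coordinates of two points of P or the difference of y-coordinates of two points of P. -/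
/-!
Axis-aligned squares are the closed balls of the sup metric on `ℝ × ℝ`, and in that metric every
bounded set lies in a closed ball of half its diameter. Hence, given a feasible `s`, each square
may be replaced by one whose side is the diameter of the points of `P` it covers. So `s` can be
rounded down to the largest pairwise distance of `P` (or `0`) not exceeding it, and only finitely
many candidates for the minimum remain.
-/

noncomputable section

/-- The axis-aligned closed square of side length s centered at c. -/
def sqC (c : ℝ × ℝ) (s : ℝ) : Set (ℝ × ℝ) :=
  Set.Icc (c.1 - s / 2) (c.1 + s / 2) ×ˢ Set.Icc (c.2 - s / 2) (c.2 + s / 2)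

/-- s is a feasible side length: p axis-aligned closed squares of side s
can cover all but at most k points of P. -/
def feasible (P : Finset (ℝ × ℝ)) (p k : ℕ) (s : ℝ) : Prop :=
  0 ≤ s ∧ ∃ c : Fin p → ℝ × ℝ,
    ((P : Set (ℝ × ℝ)) \ ⋃ i : Fin p, sqC (c i) s).ncard ≤ k

open Metric Bornology

/-- A centrable space: every bounded set lies in a closed ball of half its diameter, that is,
circumradius and diameter are related as in `ℓ∞` spaces. The radius is required to be attained. -/
def IsCentrable (X : Type*) [PseudoMetricSpace X] : Prop :=
  ∀ ⦃Q : Set X⦄, IsBounded Q → ∃ c, Q ⊆ closedBall c (diam Q / 2)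

theorem isCentrable_real : IsCentrable ℝ := by
  intro Q hQ
  refine ⟨(sInf Q + sSup Q) / 2, ?_⟩
  rw [Real.closedBall_eq_Icc, Real.diam_eq hQ]
  exact hQ.subset_Icc_sInf_sSup.trans (Set.Icc_subset_Icc (by linarith) (by linarith))

theorem IsCentrable.prod {X Y : Type*} [PseudoMetricSpace X] [PseudoMetricSpace Y]
    (hX : IsCentrable X) (hY : IsCentrable Y) : IsCentrable (X × Y) := by
  intro Q hQ
  obtain ⟨a, ha⟩ := hX hQ.image_fst
  obtain ⟨b, hb⟩ := hY hQ.image_snd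
  have hfst : diam (Prod.fst '' Q) ≤ diam Q := by
    simpa using LipschitzWith.prod_fst.diam_image_le Q hQ
  have hsnd : diam (Prod.snd '' Q) ≤ diam Q := by
    simpa using LipschitzWith.prod_snd.diam_image_le Q hQ
  refine ⟨(a, b), fun q hq => ?_⟩
  rw [← closedBall_prod_same]
  exact ⟨closedBall_subset_closedBall (by gcongr) (ha ⟨q, hq, rfl⟩),
    closedBall_subset_closedBall (by gcongr) (hb ⟨q, hq, rfl⟩)⟩

theorem exists_mem_isLeast_of_forall_exists_le {α : Type*} [LinearOrder α] {S D : Set α}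
    (hD : D.Finite) (hS : S.Nonempty) (h : ∀ s ∈ S, ∃ t ∈ D, t ≤ s ∧ t ∈ S) :
    ∃ m ∈ D, IsLeast S m := by
  obtain ⟨s, hs⟩ := hS
  obtain ⟨t, htD, -, htS⟩ := h s hs
  obtain ⟨m, ⟨hmD, hmS⟩, hmin⟩ := Set.exists_min_image (D ∩ S) id
    (hD.subset Set.inter_subset_left) ⟨t, htD, htS⟩
  refine ⟨m, hmD, hmS, fun r hr => ?_⟩
  obtain ⟨r', hr'D, hr'r, hr'S⟩ := h r hr
  exact (hmin r' ⟨hr'D, hr'S⟩).trans hr'r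

section Covering

variable {X : Type*} [PseudoMetricSpace X]

/-- Feasibility in the `(p,k)`-center problem of a metric space: some family of closed balls of
radius `s / 2`, indexed by `ι`, covers all but at most `k` points of `P`. The parameter is the
nominal diameter `s` rather than the radius, to match the side length of a square. -/
def IsFeasibleDiam (P : Finset X) (ι : Type*) (k : ℕ) (s : ℝ) : Prop :=
  0 ≤ s ∧ ∃ c : ι → X, ((P : Set X) \ ⋃ i, closedBall (c i) (s / 2)).ncard ≤ k

/-- The pairwise distances of the points of `P`, together with `0` (so that the set is nonempty even
when `P` is empty): the candidate values for the optimal diameter. -/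
def candidateDiams (P : Finset X) : Set ℝ :=
  insert 0 (Set.image2 dist (P : Set X) (P : Set X))

theorem finite_candidateDiams (P : Finset X) : (candidateDiams P).Finite :=
  (P.finite_toSet.image2 dist P.finite_toSet).insert 0

variable {ι : Type*} {P : Finset X} {k : ℕ} {s t : ℝ}

theorem nonempty_setOf_isFeasibleDiam [Nonempty ι] (hX : IsCentrable X) (P : Finset X) (k : ℕ) :
    {s : ℝ | IsFeasibleDiam P ι k s}.Nonempty := by
  obtain ⟨c, hc⟩ := hX P.finite_toSet.isBounded
  refine ⟨diam (P : Set X), diam_nonneg, fun _ => c, ?_⟩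
  rw [Set.iUnion_const, Set.sdiff_eq_empty.2 hc, Set.ncard_empty]
  exact k.zero_le

theorem IsCentrable.isFeasibleDiam_of_forall_diam_le (hX : IsCentrable X) (ht : 0 ≤ t)
    {B : ι → Set X} (hB : ((P : Set X) \ ⋃ i, B i).ncard ≤ k)
    (hdiam : ∀ i, diam ((P : Set X) ∩ B i) ≤ t) : IsFeasibleDiam P ι k t := by
  choose c hc using fun i => hX (P.finite_toSet.isBounded.subset (Set.inter_subset_left (t := B i)))
  refine ⟨ht, c, (Set.ncard_le_ncard ?_ P.finite_toSet.sdiff).trans hB⟩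
  rintro q ⟨hqP, hq⟩
  refine ⟨hqP, fun hqB => hq ?_⟩
  obtain ⟨i, hi⟩ := Set.mem_iUnion.1 hqB
  have hdiam_half : diam ((P : Set X) ∩ B i) / 2 ≤ t / 2 := by gcongr; exact hdiam i
  exact Set.mem_iUnion.2 ⟨i, closedBall_subset_closedBall hdiam_half (hc i ⟨hqP, hi⟩)⟩

theorem IsFeasibleDiam.exists_mem_candidateDiams_le (hX : IsCentrable X)
    (hs : IsFeasibleDiam P ι k s) :
    ∃ t ∈ candidateDiams P, t ≤ s ∧ IsFeasibleDiam P ι k t := by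
  obtain ⟨hs0, c, hc⟩ := hs
  have hzero : (0 : ℝ) ∈ candidateDiams P := Set.mem_insert _ _
  obtain ⟨t, ⟨htD, hts⟩, hmax⟩ := Set.exists_max_image (candidateDiams P ∩ Set.Iic s) id
    ((finite_candidateDiams P).subset Set.inter_subset_left) ⟨0, hzero, hs0⟩
  have ht0 : 0 ≤ t := hmax 0 ⟨hzero, hs0⟩
  refine ⟨t, htD, hts, hX.isFeasibleDiam_of_forall_diam_le ht0 hc fun i => ?_⟩
  refine diam_le_of_forall_dist_le ht0 fun u ⟨huP, hu⟩ v ⟨hvP, hv⟩ => ?_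
  have huv : dist u v ≤ s := by
    linarith [dist_triangle_right u v (c i), mem_closedBall.1 hu, mem_closedBall.1 hv]
  exact hmax _ ⟨Set.mem_insert_of_mem _ (Set.mem_image2_of_mem huP hvP), huv⟩

end Covering

theorem stmt19_general {X ι : Type*} [PseudoMetricSpace X] [Nonempty ι] (hX : IsCentrable X)
    (P : Finset X) (k : ℕ) :
    IsFeasibleDiam P ι k (sInf {s : ℝ | IsFeasibleDiam P ι k s}) ∧
    (sInf {s : ℝ | IsFeasibleDiam P ι k s} = 0 ∨
      ∃ u ∈ P, ∃ v ∈ P, sInf {s : ℝ | IsFeasibleDiam P ι k s} = dist u v) := by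
  obtain ⟨m, hmD, hm⟩ := exists_mem_isLeast_of_forall_exists_le (finite_candidateDiams P)
    (nonempty_setOf_isFeasibleDiam (ι := ι) hX P k) fun _ hs => hs.exists_mem_candidateDiams_le hX
  rw [hm.csInf_eq]
  refine ⟨hm.1, hmD.imp_right ?_⟩
  rintro ⟨u, hu, v, hv, rfl⟩
  exact ⟨u, hu, v, hv, rfl⟩

theorem sqC_eq_closedBall (c : ℝ × ℝ) (s : ℝ) : sqC c s = closedBall c (s / 2) := by
  rw [← closedBall_prod_same, Real.closedBall_eq_Icc, Real.closedBall_eq_Icc, sqC]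

theorem feasible_eq_isFeasibleDiam (P : Finset (ℝ × ℝ)) (p k : ℕ) :
    feasible P p k = IsFeasibleDiam P (Fin p) k := by
  ext s
  simp only [feasible, IsFeasibleDiam, sqC_eq_closedBall]

theorem dist_eq_abs_fst_or_abs_snd (u v : ℝ × ℝ) :
    dist u v = |u.1 - v.1| ∨ dist u v = |u.2 - v.2| := by
  simpa only [Prod.dist_eq, Real.dist_eq] using max_choice |u.1 - v.1| |u.2 - v.2|

theorem stmt19 (P : Finset (ℝ × ℝ)) (p k : ℕ) (hp : 1 ≤ p) :
    feasible P p k (sInf {s : ℝ | feasible P p k s}) ∧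
    (sInf {s : ℝ | feasible P p k s} = 0 ∨
      ∃ u ∈ P, ∃ v ∈ P,
        sInf {s : ℝ | feasible P p k s} = |u.1 - v.1| ∨
        sInf {s : ℝ | feasible P p k s} = |u.2 - v.2|) := by
  have : Nonempty (Fin p) := Fin.pos_iff_nonempty.1 hp
  rw [feasible_eq_isFeasibleDiam]
  refine (stmt19_general (isCentrable_real.prod isCentrable_real) P k).imp_right
    (Or.imp_right ?_)
  rintro ⟨u, hu, v, hv, h⟩
  exact ⟨u, hu, v, hv, h ▸ dist_eq_abs_fst_or_abs_snd u v⟩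
end
end
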